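/- arXiv:2104.05954 — 9 statements merged into one kernel-verified Lean document; each statement's English description precedes it below -/
import Mathlib

section
/- Let N ≥ 2 and 1 ≤ p ≤ ⌊N/2⌋ be integers and set m = gcd(N,p). If N/m ≤ 4, then there exists no feasible vector for (N,p); that is, no x ∈ {0,1}^{N−1} with x_l = x_{N−l} for all l ∈ {1,…,N−1} satisfies ∑_{l=1}^{N−1} x_l·cos(2πpl/N)·(−1 + cos(2πkl/N)) < 0 for every k ∈ {1,…,N−1}. -/
open Real Finset

/-- `x : ℕ → ℝ` is a feasible vector for `(N, p)`: each `x l` (for `l = 1, …, N-1`)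
is `0` or `1`, `x` satisfies the symmetry `x l = x (N - l)`, and
`(L^{(N,p)} x)_k < 0` for every `k = 1, …, N-1`. -/
def feasible (N p : ℕ) (x : ℕ → ℝ) : Prop :=
  (∀ l ∈ Finset.Icc 1 (N - 1), x l = 0 ∨ x l = 1) ∧
  (∀ l ∈ Finset.Icc 1 (N - 1), x l = x (N - l)) ∧
  (∀ k ∈ Finset.Icc 1 (N - 1),
    ∑ l ∈ Finset.Icc 1 (N - 1),
      x l * Real.cos (2 * π * p * l / N) * (-1 + Real.cos (2 * π * k * l / N)) < 0)

theorem aux_cos (n : ℕ) (h0 : 1 ≤ n) (h : n ≤ 4) (t : ℝ) (ht : Real.cos (n * t) = 1) :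
    0 ≤ Real.cos t * (-1 + Real.cos t) := by
  have h1 := Real.cos_le_one t
  generalize hc : Real.cos t = c at *
  interval_cases n
  · norm_num at ht
    rw [hc] at ht; subst ht; norm_num
  · push_cast at ht
    rw [Real.cos_two_mul, hc] at ht
    nlinarith
  · push_cast at ht
    rw [Real.cos_three_mul, hc] at ht
    have : (c - 1) * (2 * c + 1) ^ 2 = 0 := by linarith
    rcases mul_eq_zero.1 this with h | h
    · have : c = 1 := by linarith
      subst this; norm_num
    · have : 2 * c + 1 = 0 := by simpa using h
      nlinarith
  · push_cast at ht
    rw [show (4 : ℝ) * t = 2 * (2 * t) by ring, Real.cos_two_mul, Real.cos_two_mul, hc] at ht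
    have : c ^ 2 * (c ^ 2 - 1) = 0 := by linarith
    rcases mul_eq_zero.1 this with h | h
    · have : c = 0 := by simpa using h
      subst this; norm_num
    · nlinarith

/-- If `N ≥ 2`, `1 ≤ p ≤ ⌊N/2⌋` and `N / gcd(N,p) ≤ 4`, then there is no
feasible vector for `(N, p)`. -/
theorem no_feasible_of_small_Ntilde (N p : ℕ) (hN : 2 ≤ N) (hp1 : 1 ≤ p) (hp2 : p ≤ N / 2)
    (h : N / Nat.gcd N p ≤ 4) : ¬ ∃ x : ℕ → ℝ, feasible N p x := by
  rintro ⟨x, hx, -, hk⟩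
  have hs := hk p (Finset.mem_Icc.2 ⟨hp1, by omega⟩)
  refine absurd hs (not_lt.2 (Finset.sum_nonneg fun l hl => ?_))
  rw [mul_assoc]
  refine mul_nonneg (by rcases hx l hl with h | h <;> rw [h]; norm_num) ?_
  have hg : 0 < Nat.gcd N p := Nat.gcd_pos_of_pos_left _ (by omega)
  obtain ⟨n, hn⟩ := Nat.gcd_dvd_left N p
  obtain ⟨q, hq⟩ := Nat.gcd_dvd_right N p
  generalize Nat.gcd N p = m at *
  have hnm : N / m = n := by rw [hn]; exact Nat.mul_div_cancel_left _ hg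
  have hn0 : 1 ≤ n := by
    rcases Nat.eq_zero_or_pos n with h | h
    · subst h; omega
    · exact h
  refine aux_cos n hn0 (hnm ▸ h) _ ?_
  have e : (n : ℝ) * (2 * π * p * l / N) = ((q * l : ℕ) : ℝ) * (2 * π) := by
    rw [hn, hq]
    have : (m : ℝ) ≠ 0 := by positivity
    have : (n : ℝ) ≠ 0 := by positivity
    push_cast
    field_simp
  rw [e]
  exact Real.cos_nat_mul_two_pi _
end

section
/- The supremum of the set {(∑_{l=1}^{N−1} x_l)/(N−1) : N ≥ 2, 1 ≤ p ≤ ⌊N/2⌋, x feasible for (N,p)} equals 11/19 − (2/19)·(∑_{l=1}^{5} [−cos(2πl/19) + cos²(2πl/19)]) / (−cos(12π/19) + cos²(12π/19)) = 0.683875… . -/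
open Real Finset

def cosQ (x : ℚ) : ℚ := ((List.range 17).map fun m => (-1) ^ m * x ^ (2 * m) / ((2 * m).factorial : ℚ)).sum

def angQ (j n : ℕ) : ℚ := 2 * (3141592653590 / 1000000000000) * j / n

lemma cos_taylor (x : ℝ) (M : ℕ) :
    (∑ m ∈ range (2 * M), ((x : ℂ) * Complex.I) ^ m / (m.factorial : ℂ)).re
      = ∑ m ∈ range M, (-1) ^ m * x ^ (2 * m) / ((2 * m).factorial : ℝ) := by
  induction M with
  | zero => simp
  | succ M ih =>
    rw [show 2 * (M + 1) = 2 * M + 1 + 1 by ring, sum_range_succ, sum_range_succ, sum_range_succ,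
      Complex.add_re, Complex.add_re, ih]
    have h1 : ((x : ℂ) * Complex.I) ^ (2 * M) / ((2 * M).factorial : ℂ)
        = (((-1) ^ M * x ^ (2 * M) / ((2 * M).factorial : ℝ) : ℝ) : ℂ) := by
      push_cast
      rw [mul_pow, pow_mul Complex.I, Complex.I_sq]; ring
    have h2 : ((x : ℂ) * Complex.I) ^ (2 * M + 1) / ((2 * M + 1).factorial : ℂ)
        = (((-1) ^ M * x ^ (2 * M + 1) / ((2 * M + 1).factorial : ℝ) : ℝ) : ℂ) * Complex.I := by
      push_cast
      rw [mul_pow, pow_succ Complex.I, pow_mul Complex.I, Complex.I_sq]; ring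
    rw [h1, h2, Complex.ofReal_re, Complex.re_ofReal_mul, Complex.I_re]
    ring

lemma cosQ_cast (q : ℚ) :
    ((cosQ q : ℚ) : ℝ) = ∑ m ∈ range 17, (-1) ^ m * (q : ℝ) ^ (2 * m) / ((2 * m).factorial : ℝ) := by
  have : cosQ q = ∑ m ∈ range 17, (-1) ^ m * q ^ (2 * m) / ((2 * m).factorial : ℚ) := by
    rw [cosQ, ← List.sum_toFinset _ List.nodup_range, List.toFinset_range]
  rw [this]; push_cast; rfl

lemma cosQ_bound (q : ℚ) (h0 : 0 ≤ q) (h1 : q ≤ 63 / 10) :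
    |Real.cos q - cosQ q| ≤ 1 / 10 ^ 10 := by
  have hq0 : (0 : ℝ) ≤ q := by exact_mod_cast h0
  have hq1 : (q : ℝ) ≤ 63 / 10 := by
    have : ((q : ℚ) : ℝ) ≤ ((63 / 10 : ℚ) : ℝ) := by exact_mod_cast h1
    simpa using this
  have hn : ‖((q : ℝ) : ℂ) * Complex.I‖ = q := by
    rw [norm_mul, Complex.norm_I, mul_one, Complex.norm_real, Real.norm_eq_abs, abs_of_nonneg hq0]
  have hb := Complex.exp_bound' (x := ((q : ℝ) : ℂ) * Complex.I) (n := 2 * 17) (by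
    rw [hn]; push_cast; rw [div_le_iff₀ (by norm_num)]; norm_num; linarith)
  have hre := (Complex.abs_re_le_norm _).trans hb
  rw [Complex.sub_re, cos_taylor, Complex.exp_ofReal_mul_I_re, ← cosQ_cast, hn] at hre
  refine hre.trans ?_
  have : (q : ℝ) ^ (2 * 17) ≤ (63 / 10) ^ (2 * 17) := pow_le_pow_left₀ hq0 hq1 _
  calc (q : ℝ) ^ (2 * 17) / ((2 * 17).factorial : ℝ) * 2
      ≤ (63 / 10) ^ (2 * 17) / ((2 * 17).factorial : ℝ) * 2 := by gcongr
    _ ≤ _ := by norm_num [Nat.factorial]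

lemma ang_bound (j n : ℕ) (hn : 0 < n) (hj : j ≤ n) :
    |Real.cos (2 * π * j / n) - cosQ (angQ j n)| ≤ 1 / 10 ^ 8 := by
  have hn' : (0 : ℝ) < n := by exact_mod_cast hn
  have hnq : (0 : ℚ) < n := by exact_mod_cast hn
  have hr0 : (0 : ℝ) ≤ (j : ℝ) / n := by positivity
  have hr1 : (j : ℝ) / n ≤ 1 := by rw [div_le_one hn']; exact_mod_cast hj
  have hr1q : (j : ℚ) / n ≤ 1 := by rw [div_le_one hnq]; exact_mod_cast hj
  have e : angQ j n = 2 * (3141592653590 / 1000000000000) * ((j : ℚ) / n) := by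
    unfold angQ; ring
  have h := cosQ_bound (angQ j n) (by unfold angQ; positivity) (by rw [e]; linarith)
  have h2 := Real.abs_cos_sub_cos_le (2 * π * j / n) (angQ j n : ℚ)
  have h3 : |2 * π * j / n - (angQ j n : ℚ)| ≤ 1 / 10 ^ 9 := by
    have : 2 * π * j / n - ((angQ j n : ℚ) : ℝ)
        = 2 * (π - 3141592653590 / 1000000000000) * ((j : ℝ) / n) := by
      rw [e]; push_cast; ring
    rw [this, abs_mul, abs_mul, abs_of_nonneg hr0]
    have h4 : |π - 3141592653590 / 1000000000000| ≤ 1 / 10 ^ 10 := by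
      rw [abs_le]; constructor <;> linarith [Real.pi_gt_d20, Real.pi_lt_d20]
    have h5 : |(2 : ℝ)| = 2 := abs_of_pos (by norm_num)
    rw [h5]
    calc 2 * |π - 3141592653590 / 1000000000000| * ((j : ℝ) / n) ≤ 2 * (1 / 10 ^ 10) * 1 := by
          gcongr
      _ ≤ _ := by norm_num
  have h6 := h2.trans h3
  rw [abs_le] at h h6 ⊢
  constructor <;> linarith [h.1, h.2, h6.1, h6.2]

def lamQ (n : ℕ) : ℚ :=
  (([0, 0, 50, 134, 0, 69, 133, 367, 83, 133, 247, 93, 133, 208, 99, 133, 189, 104, 133, 177, 107, 133, 93,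
    110, 133, 96, 112, 133, 99, 114, 133] : List ℕ).getD n 0 : ℚ) / 100

def fQ (j n : ℕ) : ℚ := - cosQ (angQ j n) + cosQ (angQ j n) ^ 2

def chkQ (n : ℕ) : Bool :=
  decide (((List.range n).map fun j => Max.max 0 (1 - lamQ n * fQ j n) + 1 / 10 ^ 6).sum
    ≤ (n : ℚ) * (683875 / 1000000)) && decide (lamQ n ≤ 4)

lemma chk_all : ∀ n ∈ List.range 31, n < 2 ∨ n = 4 ∨ n = 19 ∨ chkQ n = true := by decide +kernel

lemma f_bound (j n : ℕ) (hn : 0 < n) (hj : j ≤ n) :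
    |(-Real.cos (2 * π * j / n) + Real.cos (2 * π * j / n) ^ 2) - fQ j n| ≤ 4 / 10 ^ 8 := by
  have h := ang_bound j n hn hj
  have h1 := Real.neg_one_le_cos (2 * π * j / n)
  have h2 := Real.cos_le_one (2 * π * j / n)
  unfold fQ
  push_cast
  set c := Real.cos (2 * π * j / n)
  set d : ℝ := (cosQ (angQ j n) : ℝ)
  have e : -c + c ^ 2 - (-d + d ^ 2) = (c - d) * (c + d - 1) := by ring
  have h3 : |c + d - 1| ≤ 4 := by
    rw [abs_le] at h ⊢; constructor <;> linarith [h.1, h.2]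
  rw [e, abs_mul]
  calc |c - d| * |c + d - 1| ≤ (1 / 10 ^ 8) * 4 := by gcongr
    _ = _ := by norm_num

lemma small_n (n : ℕ) (h2 : 2 ≤ n) (h31 : n < 31) (h4 : n ≠ 4) (h19 : n ≠ 19) :
    ∃ lam : ℝ, 0 ≤ lam ∧ ∑ j ∈ range n,
      Max.max 0 (1 - lam * (-Real.cos (2 * π * j / n) + Real.cos (2 * π * j / n) ^ 2))
        ≤ (n : ℝ) * 0.683875 := by
  have hc : chkQ n = true := by
    rcases chk_all n (by simpa using h31) with h | h | h | h
    · omega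
    · exact absurd h h4
    · exact absurd h h19
    · exact h
  unfold chkQ at hc
  rw [Bool.and_eq_true, decide_eq_true_eq, decide_eq_true_eq,
    ← List.sum_toFinset _ List.nodup_range, List.toFinset_range] at hc
  obtain ⟨hc, hl⟩ := hc
  have hl0 : (0 : ℚ) ≤ lamQ n := by unfold lamQ; positivity
  have hl0' : (0 : ℝ) ≤ lamQ n := by exact_mod_cast hl0
  have hl' : ((lamQ n : ℚ) : ℝ) ≤ 4 := by exact_mod_cast hl
  refine ⟨lamQ n, hl0', ?_⟩
  have hc' : (((∑ j ∈ range n, (Max.max 0 (1 - lamQ n * fQ j n) + 1 / 10 ^ 6) : ℚ)) : ℝ)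
      ≤ ((n * (683875 / 1000000) : ℚ) : ℝ) := by exact_mod_cast hc
  push_cast at hc'
  refine le_trans (sum_le_sum fun j hj => ?_) (hc'.trans (by norm_num))
  have hb := f_bound j n (by omega) (by simp at hj; omega)
  rw [abs_le] at hb
  have h5 : (lamQ n : ℝ) * ((fQ j n : ℝ) - (-Real.cos (2 * π * j / n) + Real.cos (2 * π * j / n) ^ 2))
      ≤ 4 * (4 / 10 ^ 8) := by
    calc _ ≤ (lamQ n : ℝ) * (4 / 10 ^ 8) := by gcongr; linarith [hb.1]
      _ ≤ _ := by gcongr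
  have e6 : (4 : ℝ) * (4 / 10 ^ 8) ≤ 1 / 10 ^ 6 := by norm_num
  have e7 : (0 : ℝ) < 1 / 10 ^ 6 := by norm_num
  apply max_le
  · linarith [le_max_left (0 : ℝ) (1 - lamQ n * fQ j n)]
  · linarith [le_max_right (0 : ℝ) (1 - lamQ n * fQ j n)]

lemma mu_chk : 2 * (fQ 1 19 + fQ 2 19 + fQ 3 19 + fQ 4 19 + fQ 5 19) + 1.993625 * fQ 6 19 + 1 / 10 ^ 6 ≤ 0
    ∧ 1 / 10 ^ 6 ≤ 2 * (fQ 1 19 + fQ 2 19 + fQ 3 19 + fQ 4 19 + fQ 5 19) + 1.993644 * fQ 6 19 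
    ∧ 1 / 2 ≤ fQ 6 19 := by decide +kernel

/-- cosines at the multiples of the nineteenth part of the circle. -/
noncomputable def cc (j : ℕ) : ℝ := Real.cos (2 * π * j / 19)

noncomputable def ff (j : ℕ) : ℝ := -cc j + cc j ^ 2

lemma ff_bound (j : ℕ) (hj : j ≤ 19) : |ff j - fQ j 19| ≤ 4 / 10 ^ 8 := by
  have := f_bound j 19 (by norm_num) hj
  simpa [ff, cc] using this

lemma cc_bound (j : ℕ) (hj : j ≤ 19) : |cc j - cosQ (angQ j 19)| ≤ 1 / 10 ^ 8 := by
  have := ang_bound j 19 (by norm_num) hj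
  simpa [cc] using this

lemma ff_num : 2 * (ff 1 + ff 2 + ff 3 + ff 4 + ff 5) + 1.993625 * ff 6 ≤ 0
    ∧ 0 < 2 * (ff 1 + ff 2 + ff 3 + ff 4 + ff 5) + 1.993644 * ff 6 ∧ 0 < ff 6 := by
  obtain ⟨h1, h2, h3⟩ := mu_chk
  have h1' := (Rat.cast_le (K := ℝ)).2 h1
  have h2' := (Rat.cast_le (K := ℝ)).2 h2
  have h3' := (Rat.cast_le (K := ℝ)).2 h3
  push_cast at h1' h2' h3'
  have b1 := abs_le.1 (ff_bound 1 (by norm_num))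
  have b2 := abs_le.1 (ff_bound 2 (by norm_num))
  have b3 := abs_le.1 (ff_bound 3 (by norm_num))
  have b4 := abs_le.1 (ff_bound 4 (by norm_num))
  have b5 := abs_le.1 (ff_bound 5 (by norm_num))
  have b6 := abs_le.1 (ff_bound 6 (by norm_num))
  norm_num at *
  refine ⟨?_, ?_, ?_⟩ <;> linarith [b1.1, b1.2, b2.1, b2.2, b3.1, b3.2, b4.1, b4.2, b5.1, b5.2, b6.1, b6.2]

lemma cc_mod (j : ℕ) : cc (j % 19) = cc j := by
  have h : (j : ℝ) = (j % 19 : ℕ) + 19 * (j / 19 : ℕ) := by exact_mod_cast (Nat.mod_add_div j 19).symm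
  unfold cc
  rw [h, show 2 * π * (((j % 19 : ℕ) : ℝ) + 19 * (j / 19 : ℕ)) / 19
    = 2 * π * ((j % 19 : ℕ) : ℝ) / 19 + (j / 19 : ℕ) * (2 * π) by ring, Real.cos_add_nat_mul_two_pi]

def gQ (k j : ℕ) : ℚ := cosQ (angQ j 19) * (-1 + cosQ (angQ (k * j % 19) 19))

lemma k_chk : ∀ k ∈ List.range 18, k < 2 ∨
    gQ k 1 + gQ k 2 + gQ k 3 + gQ k 4 + gQ k 5 + gQ k 6 ≤ - 1 / 10 := by decide +kernel

lemma k_num (k : ℕ) (h2 : 2 ≤ k) (h18 : k < 18) :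
    cc 1 * (-1 + cc (k * 1)) + cc 2 * (-1 + cc (k * 2)) + cc 3 * (-1 + cc (k * 3))
     + cc 4 * (-1 + cc (k * 4)) + cc 5 * (-1 + cc (k * 5)) + cc 6 * (-1 + cc (k * 6)) < 0 := by
  have hk : gQ k 1 + gQ k 2 + gQ k 3 + gQ k 4 + gQ k 5 + gQ k 6 ≤ - 1 / 10 := by
    rcases k_chk k (by simpa using h18) with h | h
    · omega
    · exact h
  have hk' := (Rat.cast_le (K := ℝ)).2 hk
  push_cast at hk'
  have key : ∀ j ≤ 19, cc j * (-1 + cc (k * j)) ≤ gQ k j + 1 / 10 ^ 6 := by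
    intro j hj
    have b1 := cc_bound j hj
    have b2 := cc_bound (k * j % 19) (by omega)
    rw [cc_mod] at b2
    unfold gQ
    push_cast
    have h3 : |cc j| ≤ 1 := Real.abs_cos_le_one _
    have h4 : |cc (k * j)| ≤ 1 := Real.abs_cos_le_one _
    set c := cc j
    set d := cc (k * j)
    set c' : ℝ := (cosQ (angQ j 19) : ℝ)
    set d' : ℝ := (cosQ (angQ (k * j % 19) 19) : ℝ)
    have e : c * (-1 + d) - c' * (-1 + d') = (c - c') * (-1 + d') + c * (d - d') := by ring
    have h5 : |-1 + d'| ≤ 3 := by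
      rw [abs_le] at *; constructor <;> linarith [b2.1, b2.2, h4.1, h4.2]
    have h6 : |(c - c') * (-1 + d')| ≤ (1 / 10 ^ 8) * 3 := by rw [abs_mul]; gcongr
    have h7 : |c * (d - d')| ≤ 1 * (1 / 10 ^ 8) := by rw [abs_mul]; gcongr
    have h8 := (abs_le.1 h6).2
    have h9 := (abs_le.1 h7).2
    norm_num at *
    linarith
  have k1 := key 1 (by norm_num)
  have k2 := key 2 (by norm_num)
  have k3 := key 3 (by norm_num)
  have k4 := key 4 (by norm_num)
  have k5 := key 5 (by norm_num)
  have k6 := key 6 (by norm_num)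
  norm_num at *
  linarith

lemma c_chk : 4 ≤ 1 + 2 * (cosQ (angQ 1 19) + cosQ (angQ 2 19) + cosQ (angQ 3 19) + cosQ (angQ 4 19)
    + cosQ (angQ 5 19)) + 4 * cosQ (angQ 6 19) ∧ cosQ (angQ 6 19) ≤ - 1 / 10 := by decide +kernel

lemma c_num : 0 < 1 + 2 * (cc 1 + cc 2 + cc 3 + cc 4 + cc 5) + 4 * cc 6 ∧ cc 6 < 0 := by
  have h1' := (Rat.cast_le (K := ℝ)).2 c_chk.1
  have h2' := (Rat.cast_le (K := ℝ)).2 c_chk.2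
  push_cast at h1' h2'
  have b1 := abs_le.1 (cc_bound 1 (by norm_num))
  have b2 := abs_le.1 (cc_bound 2 (by norm_num))
  have b3 := abs_le.1 (cc_bound 3 (by norm_num))
  have b4 := abs_le.1 (cc_bound 4 (by norm_num))
  have b5 := abs_le.1 (cc_bound 5 (by norm_num))
  have b6 := abs_le.1 (cc_bound 6 (by norm_num))
  norm_num at *
  refine ⟨?_, ?_⟩ <;> linarith [b1.1, b1.2, b2.1, b2.2, b3.1, b3.2, b4.1, b4.2, b5.1, b5.2, b6.1, b6.2]

noncomputable def fr (j n : ℕ) : ℝ := -Real.cos (2 * π * j / n) + Real.cos (2 * π * j / n) ^ 2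

lemma dir_sum (x : ℝ) (K : ℕ) :
    Real.sin x * (2 * ∑ j ∈ range (K + 1), Real.cos (2 * x * j) - 1) = Real.sin ((2 * K + 1) * x) := by
  induction K with
  | zero => simp; ring
  | succ K ih =>
    rw [sum_range_succ]
    have e1 : (2 * ((K + 1 : ℕ) : ℝ) + 1) * x = 2 * x * ((K + 1 : ℕ) : ℝ) + x := by ring
    have e2 : (2 * (K : ℝ) + 1) * x = 2 * x * ((K + 1 : ℕ) : ℝ) - x := by push_cast; ring
    rw [e2, Real.sin_sub] at ih
    rw [e1, Real.sin_add]
    linarith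

lemma fr_reflect (j n : ℕ) (hn : 0 < n) (hj : j ≤ n) : fr (n - j) n = fr j n := by
  have hn' : (n : ℝ) ≠ 0 := by positivity
  have : Real.cos (2 * π * ((n - j : ℕ) : ℝ) / n) = Real.cos (2 * π * j / n) := by
    rw [Nat.cast_sub hj, ← Real.cos_two_pi_sub]
    congr 1
    field_simp
    ring
  unfold fr; rw [this]

lemma div_help {k y s A R : ℝ} (h : k * y ≤ s) (hy : 0 < y) (hk : 0 < k) (hA : s * A ≤ R) (hR : 0 ≤ R) :
    k * (y * A) ≤ R := by
  by_cases hA0 : 0 ≤ A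
  · calc k * (y * A) = k * y * A := by ring
      _ ≤ s * A := by gcongr
      _ ≤ R := hA
  · have : 0 ≤ k * (y * (-A)) := by
      have : 0 ≤ -A := by linarith
      positivity
    linarith

lemma tail_num (K n : ℕ) (hn : 31 ≤ n) (h1 : 3 * K ≤ n) (h2 : n ≤ 3 * K + 2) :
    (2 * K + 1) / 3 + 4 / 3 * (2 * ∑ j ∈ range (K + 1), Real.cos (2 * π * j / n) - 1)
      - 2 / 3 * (2 * ∑ j ∈ range (K + 1), Real.cos (2 * (2 * π * j / n)) - 1) ≤ (n : ℝ) * 0.683875 := by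
  have hn0 : (0 : ℝ) < n := by exact_mod_cast (by omega : 0 < n)
  have hn31 : (31 : ℝ) ≤ n := by exact_mod_cast hn
  have h1' : 3 * (K : ℝ) ≤ n := by exact_mod_cast h1
  have h2' : (n : ℝ) ≤ 3 * K + 2 := by exact_mod_cast h2
  set y : ℝ := π / n with hy
  have hpi := Real.pi_gt_d6
  have hpi' := Real.pi_lt_d6
  have hny : n * y = π := by rw [hy]; field_simp
  have hy0 : 0 < y := by positivity
  have hy1 : y ≤ 0.1014 := by
    rw [hy, div_le_iff₀ hn0]; nlinarith
  set A := 2 * ∑ j ∈ range (K + 1), Real.cos (2 * π * j / n) - 1 with hA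
  set B := 2 * ∑ j ∈ range (K + 1), Real.cos (2 * (2 * π * j / n)) - 1 with hB
  have hA' : Real.sin y * A = Real.sin ((2 * K + 1) * y) := by
    rw [← dir_sum, hA, hy]
    congr 3; refine sum_congr rfl fun j _ => ?_
    congr 1; ring
  have hB' : Real.sin (2 * y) * B = Real.sin ((2 * K + 1) * (2 * y)) := by
    rw [← dir_sum, hB, hy]
    congr 3; refine sum_congr rfl fun j _ => ?_
    congr 1; ring
  set d : ℝ := (2 * K + 1) * y - 2 * π / 3 with hd
  have hd1 : d ≤ y := by rw [hd, ← hny]; nlinarith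
  have hd2 : -y ≤ d := by rw [hd, ← hny]; nlinarith
  have s3 : Real.sqrt 3 ≤ 1.73206 := by
    rw [Real.sqrt_le_left (by norm_num)]; norm_num
  have s3' : 0 ≤ Real.sqrt 3 := Real.sqrt_nonneg 3
  have hs1 : Real.sin (2 * π / 3) = Real.sqrt 3 / 2 := by
    rw [show 2 * π / 3 = π - π / 3 by ring, Real.sin_pi_sub, Real.sin_pi_div_three]
  have hc1 : Real.cos (2 * π / 3) = - 1 / 2 := by
    rw [show 2 * π / 3 = π - π / 3 by ring, Real.cos_pi_sub, Real.cos_pi_div_three]; ring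
  have hs2 : Real.sin (4 * π / 3) = - Real.sqrt 3 / 2 := by
    rw [show 4 * π / 3 = π / 3 + π by ring, Real.sin_add_pi, Real.sin_pi_div_three]; ring
  have hc2 : Real.cos (4 * π / 3) = - 1 / 2 := by
    rw [show 4 * π / 3 = π / 3 + π by ring, Real.cos_add_pi, Real.cos_pi_div_three]; ring
  rw [show (2 * K + 1) * y = 2 * π / 3 + d by rw [hd]; ring, Real.sin_add, hs1, hc1] at hA'
  rw [show (2 * K + 1) * (2 * y) = 4 * π / 3 + 2 * d by rw [hd]; ring, Real.sin_add, hs2, hc2] at hB'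
  have hsy := Real.sin_gt_sub_cube hy0
  have hs2y := Real.sin_gt_sub_cube (x := 2 * y) (by linarith)
  have hda : |d| ≤ 0.1014 := abs_le.2 ⟨by linarith, by linarith⟩
  have b1 := Real.sin_bound (x := d) (by linarith [hda])
  have b2 := Real.sin_bound (x := 2 * d) (by rw [abs_mul, abs_of_pos (by norm_num : (0:ℝ) < 2)]; linarith [hda])
  have p3 : |d| ^ 3 ≤ 0.1014 ^ 3 := by gcongr
  have p5 : |d| ^ 5 ≤ 0.1014 ^ 5 := by gcongr
  have q3 := abs_le.1 ((abs_pow d 3).trans_le p3)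
  rw [abs_mul, abs_of_pos (by norm_num : (0:ℝ) < 2), mul_pow] at b2
  have b1' := abs_le.1 b1
  have b2' := abs_le.1 b2
  have c1 : Real.sin d ≥ d - 0.0002 := by norm_num at *; linarith [b1'.1, q3.2]
  have c2 : Real.sin (2 * d) ≤ 2 * d + 0.0015 := by
    rw [mul_pow] at b2'; norm_num at *; linarith [b2'.2, q3.1]
  have c3 := Real.cos_le_one d
  have c4 := Real.cos_le_one (2 * d)
  have m1 : Real.sqrt 3 / 2 * Real.cos d ≤ Real.sqrt 3 / 2 * 1 := by gcongr
  have m2 : Real.sqrt 3 / 2 * Real.cos (2 * d) ≤ Real.sqrt 3 / 2 * 1 := by gcongr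
  have hP : Real.sin y * A ≤ Real.sqrt 3 / 2 - d / 2 + 0.0001 := by
    rw [hA']; linarith
  have hQ : Real.sin (2 * y) * (-B) ≤ Real.sqrt 3 / 2 + d + 0.00075 := by
    rw [mul_neg, hB']; linarith
  have hy3 : y ^ 3 ≤ 0.0103 * y := by
    rw [show y ^ 3 = y ^ 2 * y by ring]
    have : y ^ 2 ≤ 0.1014 ^ 2 := by gcongr
    gcongr
    exact this.trans (by norm_num)
  have r1 : 0.9982 * y ≤ Real.sin y := by linarith
  have r2 : 0.9931 * (2 * y) ≤ Real.sin (2 * y) := by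
    rw [mul_pow] at hs2y; linarith
  have s3'' : 1.7 ≤ Real.sqrt 3 := Real.le_sqrt_of_sq_le (by norm_num)
  have t1 := div_help r1 hy0 (by norm_num) hP (by linarith)
  have t2 := div_help r2 (by linarith) (by norm_num) hQ (by linarith)
  have goal' : y * ((2 * K + 1) / 3 + 4 / 3 * A - 2 / 3 * B) ≤ y * (n * 0.683875) := by
    have e1 : y * ((2 * K + 1) / 3 + 4 / 3 * A - 2 / 3 * B)
      = (2 * π / 3 + d) / 3 + 4 / 3 * (y * A) + 1 / 3 * (2 * y * (-B)) := by
      rw [hd]; ring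
    have e2 : y * (n * 0.683875) = π * 0.683875 := by rw [← hny]; ring
    rw [e1, e2]
    linarith
  exact le_of_mul_le_mul_left goal' hy0

lemma tail_n (n : ℕ) (hn : 31 ≤ n) :
    ∃ lam : ℝ, 0 ≤ lam ∧ ∑ j ∈ range n, Max.max 0 (1 - lam * fr j n) ≤ (n : ℝ) * 0.683875 := by
  refine ⟨4 / 3, by norm_num, ?_⟩
  obtain ⟨K, hK⟩ : ∃ K, K = n / 3 := ⟨_, rfl⟩
  have h1 : 3 * K ≤ n := by omega
  have h2 : n ≤ 3 * K + 2 := by omega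
  have hn0 : (0 : ℝ) < n := by exact_mod_cast (by omega : 0 < n)
  have h1' : 3 * (K : ℝ) ≤ n := by exact_mod_cast h1
  have h2' : (n : ℝ) ≤ 3 * K + 2 := by exact_mod_cast h2
  have hpi := Real.pi_pos
  have hc23 : Real.cos (2 * π / 3) = - 1 / 2 := by
    rw [show 2 * π / 3 = π - π / 3 by ring, Real.cos_pi_sub, Real.cos_pi_div_three]; ring
  have hsm : ∀ j ≤ K, 0 ≤ 1 - 4 / 3 * fr j n := by
    intro j hj
    have hj' : (j : ℝ) ≤ K := by exact_mod_cast hj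
    have hle : 2 * π * j / n ≤ 2 * π / 3 := by
      rw [div_le_div_iff₀ hn0 (by norm_num)]; nlinarith
    have := Real.cos_le_cos_of_nonneg_of_le_pi (by positivity) (by linarith) hle
    have h3 := Real.cos_le_one (2 * π * j / n)
    rw [hc23] at this
    unfold fr; nlinarith
  have hmid0 : ∀ j, K < j → 2 * j ≤ n → 1 - 4 / 3 * fr j n ≤ 0 := by
    intro j hj hj2
    have hj' : (n : ℝ) ≤ 3 * j := by exact_mod_cast (by omega : n ≤ 3 * j)
    have hj2' : 2 * (j : ℝ) ≤ n := by exact_mod_cast hj2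
    have hle : 2 * π / 3 ≤ 2 * π * j / n := by
      rw [div_le_div_iff₀ (by norm_num) hn0]; nlinarith
    have hpi2 : 2 * π * j / n ≤ π := by rw [div_le_iff₀ hn0]; nlinarith
    have := Real.cos_le_cos_of_nonneg_of_le_pi (by positivity) hpi2 hle
    rw [hc23] at this
    unfold fr; nlinarith
  have hmid : ∀ j ∈ Ico (K + 1) (n - K), Max.max 0 (1 - 4 / 3 * fr j n) = 0 := by
    intro j hj
    rw [mem_Ico] at hj
    apply max_eq_left
    by_cases h : 2 * j ≤ n
    · exact hmid0 j (by omega) h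
    · rw [← fr_reflect j n (by omega) (by omega)]
      exact hmid0 (n - j) (by omega) (by omega)
  have hlast : ∑ j ∈ Ico (n - K) n, Max.max 0 (1 - 4 / 3 * fr j n)
      = ∑ j ∈ range K, (1 - 4 / 3 * fr (j + 1) n) := by
    rw [← sum_range_reflect]
    symm
    refine sum_nbij (fun j => n - K + j) ?_ ?_ ?_ ?_
    · intro j hj; simp at hj ⊢; omega
    · intro a _ b _ h; simp at h; exact h
    · intro j hj; simp at hj ⊢; exact ⟨j - (n - K), by omega, by omega⟩
    · intro j hj
      simp at hj
      have e : n - (K - 1 - j + 1) = n - K + j := by omega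
      rw [← fr_reflect (K - 1 - j + 1) n (by omega) (by omega), e, max_eq_right]
      rw [← e, fr_reflect _ n (by omega) (by omega)]
      exact hsm _ (by omega)
  have hfirst : ∑ j ∈ range (K + 1), Max.max 0 (1 - 4 / 3 * fr j n)
      = ∑ j ∈ range (K + 1), (1 - 4 / 3 * fr j n) := by
    refine sum_congr rfl fun j hj => max_eq_right (hsm j (by simp at hj; omega))
  have hsplit : ∑ j ∈ range n, Max.max 0 (1 - 4 / 3 * fr j n)
      = ∑ j ∈ range (K + 1), Max.max 0 (1 - 4 / 3 * fr j n)
        + ∑ j ∈ Ico (K + 1) (n - K), Max.max 0 (1 - 4 / 3 * fr j n)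
        + ∑ j ∈ Ico (n - K) n, Max.max 0 (1 - 4 / 3 * fr j n) := by
    rw [range_eq_Ico, range_eq_Ico, sum_Ico_consecutive _ (by omega) (by omega),
      sum_Ico_consecutive _ (by omega) (by omega)]
  have h0 : fr 0 n = 0 := by simp [fr]
  have hshift : ∑ j ∈ range K, (1 - 4 / 3 * fr (j + 1) n) = ∑ j ∈ range (K + 1), (1 - 4 / 3 * fr j n) - 1 := by
    rw [sum_range_succ', h0]; ring
  rw [hsplit, hlast, hfirst, sum_eq_zero hmid, hshift]
  have hterm : ∀ j ∈ range (K + 1), 1 - 4 / 3 * fr j n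
      = 1 / 3 + 4 / 3 * Real.cos (2 * π * j / n) - 2 / 3 * Real.cos (2 * (2 * π * j / n)) := by
    intro j _
    rw [Real.cos_two_mul]; unfold fr; ring
  rw [sum_congr rfl hterm, sum_sub_distrib, sum_add_distrib, ← mul_sum, ← mul_sum]
  have := tail_num K n hn h1 h2
  simp only [sum_const, card_range, nsmul_eq_mul]
  push_cast
  linarith

noncomputable def muv : ℝ := 11 / 19 - (2 / 19) * (ff 1 + ff 2 + ff 3 + ff 4 + ff 5) / ff 6

lemma muv_num : 0.683875 ≤ muv ∧ muv < 0.683876 := by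
  obtain ⟨h1, h2, h3⟩ := ff_num
  unfold muv
  constructor
  · have : (2 / 19) * (ff 1 + ff 2 + ff 3 + ff 4 + ff 5) / ff 6 ≤ 11 / 19 - 0.683875 := by
      rw [div_le_iff₀ h3]; norm_num at *; linarith
    linarith
  · have : 11 / 19 - 0.683876 < (2 / 19) * (ff 1 + ff 2 + ff 3 + ff 4 + ff 5) / ff 6 := by
      rw [lt_div_iff₀ h3]; norm_num at *; linarith
    linarith

lemma fr_19 (j : ℕ) : fr j 19 = ff j := by simp [fr, ff, cc]

lemma n19 : ∃ lam : ℝ, 0 ≤ lam ∧ ∑ j ∈ range 19, Max.max 0 (1 - lam * fr j 19) ≤ ((19 : ℕ) : ℝ) * muv := by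
  obtain ⟨h1, h2, h3⟩ := ff_num
  have h6 := c_num.2
  have mono : ∀ i j : ℕ, i ≤ j → j ≤ 9 → cc j ≤ cc i := by
    intro i j hij hj
    have hij' : (i : ℝ) ≤ j := by exact_mod_cast hij
    have hj' : (j : ℝ) ≤ 9 := by exact_mod_cast hj
    have hpi := Real.pi_pos
    unfold cc
    apply Real.cos_le_cos_of_nonneg_of_le_pi (by positivity)
    · rw [div_le_iff₀ (by norm_num)]; nlinarith
    · gcongr
  have le1 : ∀ j, cc j ≤ 1 := fun j => Real.cos_le_one _
  have hlow : ∀ j ≤ 6, 0 ≤ 1 - 1 / ff 6 * ff j := by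
    intro j hj
    have : ff j ≤ ff 6 := by
      have := mono j 6 hj (by norm_num)
      have := le1 j
      unfold ff; nlinarith
    have h : 1 / ff 6 * ff j ≤ 1 := by
      rw [one_div, inv_mul_le_iff₀ h3]; linarith
    linarith
  have hhigh : ∀ j, 6 ≤ j → j ≤ 9 → 1 - 1 / ff 6 * ff j ≤ 0 := by
    intro j hj hj9
    have : ff 6 ≤ ff j := by
      have := mono 6 j hj hj9
      unfold ff; nlinarith
    have h : 1 ≤ 1 / ff 6 * ff j := by
      rw [one_div, le_inv_mul_iff₀ h3]; linarith
    linarith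
  have href : ∀ j ≤ 19, ff (19 - j) = ff j := by
    intro j hj
    rw [← fr_19, ← fr_19]; exact fr_reflect j 19 (by norm_num) hj
  have r10 : ff 10 = ff 9 := href 9 (by norm_num)
  have r11 : ff 11 = ff 8 := href 8 (by norm_num)
  have r12 : ff 12 = ff 7 := href 7 (by norm_num)
  have r13 : ff 13 = ff 6 := href 6 (by norm_num)
  have r14 : ff 14 = ff 5 := href 5 (by norm_num)
  have r15 : ff 15 = ff 4 := href 4 (by norm_num)
  have r16 : ff 16 = ff 3 := href 3 (by norm_num)
  have r17 : ff 17 = ff 2 := href 2 (by norm_num)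
  have r18 : ff 18 = ff 1 := href 1 (by norm_num)
  have r0 : ff 0 = 0 := by simp [ff, cc]
  refine ⟨1 / ff 6, by positivity, le_of_eq ?_⟩
  simp only [fr_19, sum_range_succ, range_zero, sum_empty, r10, r11, r12, r13, r14, r15, r16, r17, r18]
  rw [max_eq_right (hlow 0 (by norm_num)), max_eq_right (hlow 1 (by norm_num)),
    max_eq_right (hlow 2 (by norm_num)), max_eq_right (hlow 3 (by norm_num)),
    max_eq_right (hlow 4 (by norm_num)), max_eq_right (hlow 5 (by norm_num)),
    max_eq_left (hhigh 6 (by norm_num) (by norm_num)), max_eq_left (hhigh 7 (by norm_num) (by norm_num)),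
    max_eq_left (hhigh 8 (by norm_num) (by norm_num)), max_eq_left (hhigh 9 (by norm_num) (by norm_num)), r0]
  unfold muv
  field_simp
  push_cast
  ring

lemma sum_periodic (ψ : ℕ → ℝ) (n g : ℕ) (h : ∀ j, ψ (j + n) = ψ j) :
    ∑ l ∈ range (g * n), ψ l = g * ∑ l ∈ range n, ψ l := by
  have hm : ∀ a j, ψ (a * n + j) = ψ j := by
    intro a j
    induction a with
    | zero => simp
    | succ a ih => rw [← ih, ← h (a * n + j)]; congr 1; ring
  induction g with
  | zero => simp
  | succ g ih =>
    rw [add_mul, one_mul, sum_range_add, ih]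
    simp only [hm]
    push_cast; ring

lemma sum_coprime (φ : ℕ → ℝ) (n q : ℕ) (hn : 0 < n) (hq : Nat.Coprime q n)
    (h : ∀ j, φ (j % n) = φ j) : ∑ l ∈ range n, φ (q * l) = ∑ l ∈ range n, φ l := by
  have hinj : Set.InjOn (fun l => q * l % n) (range n : Set ℕ) := by
    intro a ha b hb hab
    simp at ha hb
    have h1 : q * a ≡ q * b [MOD n] := hab
    have h2 : a ≡ b [MOD n] := Nat.ModEq.cancel_left_of_coprime hq.symm h1
    exact Nat.ModEq.eq_of_lt_of_lt h2 ha hb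
  have him : (range n).image (fun l => q * l % n) = range n := by
    apply eq_of_subset_of_card_le
    · intro j hj
      simp only [mem_image, mem_range] at hj ⊢
      obtain ⟨a, _, rfl⟩ := hj
      exact Nat.mod_lt _ hn
    · rw [card_image_of_injOn hinj]
  conv_rhs => rw [← him]
  rw [sum_image hinj]
  exact sum_congr rfl fun l _ => (h _).symm

lemma cos_per (n j : ℕ) (hn : 0 < n) :
    Real.cos (2 * π * ((j + n : ℕ) : ℝ) / n) = Real.cos (2 * π * j / n) := by
  have : (n : ℝ) ≠ 0 := by positivity
  rw [← Real.cos_add_two_pi (2 * π * j / n)]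
  congr 1
  push_cast
  field_simp

lemma fr_per (n j : ℕ) (hn : 0 < n) : fr (j + n) n = fr j n := by
  unfold fr; rw [cos_per n j hn]

lemma fr_mod (n j : ℕ) (hn : 0 < n) : fr (j % n) n = fr j n := by
  have : ∀ a i, fr (i + n * a) n = fr i n := by
    intro a i
    induction a with
    | zero => simp
    | succ a ih => rw [← ih, ← fr_per n (i + n * a) hn]; congr 1; ring
  conv_rhs => rw [← Nat.mod_add_div j n]
  rw [this]

lemma key_p {N p : ℕ} {x : ℕ → ℝ} (hN : 2 ≤ N) (hp : 1 ≤ p) (hpN : p ≤ N / 2) (hx : feasible N p x) :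
    ∃ g n q : ℕ, 0 < g ∧ 2 ≤ n ∧ N = g * n ∧ Nat.Coprime q n ∧
      ∑ l ∈ Icc 1 (N - 1), x l * fr (q * l) n < 0 := by
  obtain ⟨g, n, q, hg, h1, h2, h3⟩ : ∃ g n q : ℕ, 0 < g ∧ N = g * n ∧ p = g * q ∧ Nat.Coprime q n := by
    obtain ⟨q, n, hc, h1, h2⟩ := Nat.exists_coprime p N
    exact ⟨Nat.gcd p N, n, q, Nat.gcd_pos_of_pos_left _ hp, by rw [mul_comm]; exact h2, by rw [mul_comm]; exact h1, hc⟩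
  have hn : 2 ≤ n := by
    by_contra hlt
    have : n = 0 ∨ n = 1 := by omega
    rcases this with rfl | rfl
    · omega
    · have : 0 < q := Nat.pos_of_ne_zero (by rintro rfl; omega)
      have : g ≤ g * q := Nat.le_mul_of_pos_right g this
      omega
  refine ⟨g, n, q, hg, hn, h1, h3, ?_⟩
  have := hx.2.2 p (by rw [mem_Icc]; omega)
  refine lt_of_eq_of_lt (sum_congr rfl fun l _ => ?_) this
  have hg' : (g : ℝ) ≠ 0 := by positivity
  have hn' : (n : ℝ) ≠ 0 := by positivity
  have e : 2 * π * p * l / N = 2 * π * ((q * l : ℕ) : ℝ) / n := by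
    rw [h1, h2]; push_cast; field_simp
  rw [e]; unfold fr; ring

lemma upper_red {g n q : ℕ} {x : ℕ → ℝ} {lam M : ℝ} (hg : 0 < g) (hn : 2 ≤ n) (hq : Nat.Coprime q n)
    (hx : ∀ l ∈ Icc 1 (g * n - 1), x l = 0 ∨ x l = 1)
    (h : ∑ l ∈ Icc 1 (g * n - 1), x l * fr (q * l) n < 0) (hl : 0 ≤ lam) (hM : M ≤ 1)
    (hs : ∑ j ∈ range n, Max.max 0 (1 - lam * fr j n) ≤ (n : ℝ) * M) :
    (∑ l ∈ Icc 1 (g * n - 1), x l) / (((g * n : ℕ) : ℝ) - 1) ≤ M := by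
  have hN : 2 ≤ g * n := by nlinarith
  have hN' : (2 : ℝ) ≤ ((g * n : ℕ) : ℝ) := by exact_mod_cast hN
  have h1 : ∑ l ∈ Icc 1 (g * n - 1), x l
      ≤ ∑ l ∈ Icc 1 (g * n - 1), Max.max 0 (1 - lam * fr (q * l) n) := by
    have h2 : ∑ l ∈ Icc 1 (g * n - 1), x l ≤ ∑ l ∈ Icc 1 (g * n - 1), (x l - lam * (x l * fr (q * l) n)) := by
      rw [sum_sub_distrib, ← mul_sum]
      nlinarith
    refine h2.trans (sum_le_sum fun l hl' => ?_)
    rcases hx l hl' with h0 | h0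
    · rw [h0]; simp
    · rw [h0]; simp
  have h3 : ∑ l ∈ range (g * n), Max.max 0 (1 - lam * fr (q * l) n)
      = ∑ l ∈ Icc 1 (g * n - 1), Max.max 0 (1 - lam * fr (q * l) n) + 1 := by
    have e : range (g * n) = insert 0 (Icc 1 (g * n - 1)) := by
      ext j; simp only [mem_range, mem_insert, mem_Icc]; omega
    rw [e, sum_insert (by simp)]
    simp [fr]; ring
  have h4 : ∑ l ∈ range (g * n), Max.max 0 (1 - lam * fr (q * l) n)
      = g * ∑ j ∈ range n, Max.max 0 (1 - lam * fr j n) := by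
    rw [sum_periodic (fun l => Max.max 0 (1 - lam * fr (q * l) n)),
      sum_coprime (fun l => Max.max 0 (1 - lam * fr l n)) n q (by omega) hq]
    · intro j; rw [fr_mod n j (by omega)]
    · intro j
      have : fr (q * (j + n)) n = fr (q * j) n := by
        rw [← fr_mod n (q * (j + n)) (by omega), ← fr_mod n (q * j) (by omega), mul_add, Nat.add_mul_mod_self_right]
      simp only [this]
  have h5 : (g : ℝ) * ∑ j ∈ range n, Max.max 0 (1 - lam * fr j n) ≤ g * (n * M) := by gcongr
  rw [div_le_iff₀ (by linarith)]
  push_cast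
  nlinarith

lemma upper {N p : ℕ} {x : ℕ → ℝ} (hN : 2 ≤ N) (hp : 1 ≤ p) (hpN : p ≤ N / 2) (hx : feasible N p x) :
    (∑ l ∈ Icc 1 (N - 1), x l) / ((N : ℝ) - 1) ≤ muv := by
  obtain ⟨g, n, q, hg, hn, rfl, hq, h⟩ := key_p hN hp hpN hx
  obtain ⟨m1, m2⟩ := muv_num
  have hM : muv ≤ 1 := by norm_num at m2; linarith
  have hM' : (0.683875 : ℝ) ≤ 1 := by norm_num
  by_cases h4 : n = 4
  · subst h4
    exfalso
    apply absurd h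
    rw [not_lt]
    refine sum_nonneg fun l hl => mul_nonneg ?_ ?_
    · rcases hx.1 l hl with h0 | h0 <;> rw [h0] <;> norm_num
    · have c0 : Real.cos (2 * π * (1 : ℕ) / (4 : ℕ)) = 0 := by
        rw [show 2 * π * ((1 : ℕ) : ℝ) / ((4 : ℕ) : ℝ) = π / 2 by push_cast; ring, Real.cos_pi_div_two]
      have f1 : fr 1 4 = 0 := by unfold fr; rw [c0]; norm_num
      have c2 : Real.cos (2 * π * (2 : ℕ) / (4 : ℕ)) = -1 := by
        rw [show 2 * π * ((2 : ℕ) : ℝ) / ((4 : ℕ) : ℝ) = π by push_cast; ring, Real.cos_pi]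
      have f2 : fr 2 4 = 2 := by unfold fr; rw [c2]; norm_num
      have f3 : fr 3 4 = 0 := by rw [← f1]; exact fr_reflect 1 4 (by norm_num) (by norm_num)
      have f0 : fr 0 4 = 0 := by simp [fr]
      rw [← fr_mod 4 _ (by norm_num)]
      have : q * l % 4 < 4 := Nat.mod_lt _ (by norm_num)
      interval_cases q * l % 4
      · rw [f0]
      · rw [f1]
      · rw [f2]; norm_num
      · rw [f3]
  by_cases h19 : n = 19
  · subst h19
    obtain ⟨lam, hl, hs⟩ := n19
    exact upper_red hg hn hq hx.1 h hl hM hs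
  by_cases h31 : n < 31
  · obtain ⟨lam, hl, hs⟩ := small_n n hn h31 h4 h19
    exact (upper_red hg hn hq hx.1 h hl hM' hs).trans m1
  · obtain ⟨lam, hl, hs⟩ := tail_n n (by omega)
    exact (upper_red hg hn hq hx.1 h hl hM' hs).trans m1

noncomputable def xv (g m l : ℕ) : ℝ :=
  if l % 19 ≤ 5 ∨ 14 ≤ l % 19 then 1
  else if l % 19 = 6 then (if l / 19 < m then 1 else 0)
  else if l % 19 = 13 then (if g - 1 - l / 19 < m then 1 else 0)
  else 0

lemma xv_01 (g m l : ℕ) : xv g m l = 0 ∨ xv g m l = 1 := by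
  unfold xv; split_ifs <;> simp

lemma xv_symm (g m l : ℕ) (h1 : 1 ≤ l) (h2 : l ≤ 19 * g - 1) : xv g m l = xv g m (19 * g - l) := by
  by_cases h0 : l % 19 = 0
  · have : (19 * g - l) % 19 = 0 := by omega
    simp [xv, h0, this]
  · have e1 : (19 * g - l) % 19 = 19 - l % 19 := by omega
    have e2 : (19 * g - l) / 19 = g - 1 - l / 19 := by omega
    have e3 : g - 1 - (g - 1 - l / 19) = l / 19 := by omega
    unfold xv
    rw [e1, e2, e3]
    have : l % 19 < 19 := Nat.mod_lt _ (by norm_num)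
    generalize l % 19 = r at *
    interval_cases r <;> simp

lemma sum_blocks (F : ℕ → ℝ) (g : ℕ) :
    ∑ l ∈ range (19 * g), F l = ∑ a ∈ range g, ∑ j ∈ range 19, F (19 * a + j) := by
  induction g with
  | zero => simp
  | succ g ih => rw [mul_add, mul_one, sum_range_add, ih, sum_range_succ _ g]

lemma xv_sum (g m : ℕ) (φ : ℕ → ℝ) :
    ∑ l ∈ range (19 * g), xv g m l * φ l =
      (∑ a ∈ range g, φ (19 * a + 0))
      + ((∑ a ∈ range g, φ (19 * a + 1)) + (∑ a ∈ range g, φ (19 * a + 2))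
        + (∑ a ∈ range g, φ (19 * a + 3)) + (∑ a ∈ range g, φ (19 * a + 4))
        + (∑ a ∈ range g, φ (19 * a + 5)))
      + ((∑ a ∈ range g, φ (19 * a + 18)) + (∑ a ∈ range g, φ (19 * a + 17))
        + (∑ a ∈ range g, φ (19 * a + 16)) + (∑ a ∈ range g, φ (19 * a + 15))
        + (∑ a ∈ range g, φ (19 * a + 14)))
      + (∑ a ∈ range g, (if a < m then 1 else 0) * φ (19 * a + 6))
      + (∑ a ∈ range g, (if g - 1 - a < m then 1 else 0) * φ (19 * a + 13)) := by
  rw [sum_blocks]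
  simp only [← sum_add_distrib]
  refine sum_congr rfl fun a _ => ?_
  have hm : ∀ j < 19, (19 * a + j) % 19 = j := by intro j hj; omega
  have hd : ∀ j < 19, (19 * a + j) / 19 = a := by intro j hj; omega
  simp only [sum_range_succ, range_zero, sum_empty]
  have e : ∀ j < 19, xv g m (19 * a + j) = if j ≤ 5 ∨ 14 ≤ j then 1
      else if j = 6 then (if a < m then 1 else 0)
      else if j = 13 then (if g - 1 - a < m then 1 else 0) else 0 := by
    intro j hj; unfold xv; rw [hm j hj, hd j hj]
  rw [e 0 (by norm_num), e 1 (by norm_num), e 2 (by norm_num), e 3 (by norm_num), e 4 (by norm_num),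
    e 5 (by norm_num), e 6 (by norm_num), e 7 (by norm_num), e 8 (by norm_num), e 9 (by norm_num),
    e 10 (by norm_num), e 11 (by norm_num), e 12 (by norm_num), e 13 (by norm_num), e 14 (by norm_num),
    e 15 (by norm_num), e 16 (by norm_num), e 17 (by norm_num), e 18 (by norm_num)]
  norm_num
  ring

lemma cnt (g m : ℕ) (hm : m ≤ g) : ∑ a ∈ range g, (if a < m then (1 : ℝ) else 0) = m := by
  rw [← sum_filter, sum_const, nsmul_eq_mul, mul_one]
  congr 1
  have : (range g).filter (fun a => a < m) = range m := by
    ext a; simp; omega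
  rw [this, card_range]

lemma cnt' (g m : ℕ) (hm : m ≤ g) : ∑ a ∈ range g, (if g - 1 - a < m then (1 : ℝ) else 0) = m := by
  rw [← cnt g m hm]
  exact sum_range_reflect (fun a => if a < m then (1 : ℝ) else 0) g

lemma cc_refl (k j : ℕ) (hj : j ≤ 19) : cc (k * (19 - j)) = cc (k * j) := by
  unfold cc
  rw [← Real.cos_nat_mul_two_pi_sub (2 * π * ((k * j : ℕ) : ℝ) / 19) k]
  congr 1
  push_cast [Nat.cast_sub hj]
  ring

lemma cos_sum_zero (g k : ℕ) (φ : ℝ) (hg : 0 < g) (hk : ¬ g ∣ k) :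
    ∑ a ∈ range g, Real.cos (2 * (π * k / g) * a + φ) = 0 := by
  have hg' : (g : ℝ) ≠ 0 := by positivity
  set y := π * k / g with hy
  have hs : Real.sin y ≠ 0 := by
    intro h0
    obtain ⟨z, hz⟩ := Real.sin_eq_zero_iff.1 h0
    apply hk
    rw [hy] at hz
    have h1 : (z : ℝ) * g = k := by
      have hpi := Real.pi_ne_zero
      field_simp at hz
      linarith
    have h2 : z * (g : ℤ) = (k : ℤ) := by exact_mod_cast h1
    have : (g : ℤ) ∣ (k : ℤ) := ⟨z, by rw [← h2]; ring⟩
    exact_mod_cast this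
  have tel : ∀ G : ℕ, 2 * Real.sin y * ∑ a ∈ range G, Real.cos (2 * y * a + φ)
      = Real.sin (2 * y * G - y + φ) - Real.sin (φ - y) := by
    intro G
    induction G with
    | zero => simp; ring_nf
    | succ G ih =>
      rw [sum_range_succ, mul_add, ih]
      have e1 : 2 * y * ((G + 1 : ℕ) : ℝ) - y + φ = (2 * y * G + φ) + y := by push_cast; ring
      have e2 : 2 * y * (G : ℝ) - y + φ = (2 * y * G + φ) - y := by ring
      rw [e1, e2, Real.sin_add, Real.sin_sub (2 * y * G + φ)]
      ring
  have h := tel g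
  have e : 2 * y * g - y + φ = (φ - y) + k * (2 * π) := by
    rw [hy]; field_simp; ring
  rw [e, Real.sin_add_nat_mul_two_pi, sub_self] at h
  rcases mul_eq_zero.1 h with h | h
  · exact absurd (by linarith) hs
  · exact h

lemma term_eq (g a j : ℕ) (hg : 0 < g) :
    Real.cos (2 * π * g * ((19 * a + j : ℕ) : ℝ) / ((19 * g : ℕ) : ℝ))
      = cc j := by
  have hg' : (g : ℝ) ≠ 0 := by positivity
  unfold cc
  rw [← Real.cos_add_nat_mul_two_pi (2 * π * j / 19) a]
  congr 1
  push_cast; field_simp; ring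

lemma xv_feasible (g m : ℕ) (hg : 0 < g) (hm : m ≤ g)
    (hmf : g * (ff 1 + ff 2 + ff 3 + ff 4 + ff 5) + m * ff 6 < 0) : feasible (19 * g) g (xv g m) := by
  refine ⟨fun l _ => xv_01 g m l, fun l hl => ?_, fun k hk => ?_⟩
  · rw [mem_Icc] at hl; exact xv_symm g m l hl.1 hl.2
  rw [mem_Icc] at hk
  have hg' : (0 : ℝ) < g := by exact_mod_cast hg
  have hm' : (m : ℝ) ≤ g := by exact_mod_cast hm
  have e : range (19 * g) = insert 0 (Icc 1 (19 * g - 1)) := by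
    ext j; simp only [mem_range, mem_insert, mem_Icc]; omega
  have h0 : ∑ l ∈ Icc 1 (19 * g - 1), xv g m l * Real.cos (2 * π * g * l / ((19 * g : ℕ) : ℝ))
        * (-1 + Real.cos (2 * π * k * l / ((19 * g : ℕ) : ℝ)))
      = ∑ l ∈ range (19 * g), xv g m l * (Real.cos (2 * π * g * l / ((19 * g : ℕ) : ℝ))
        * (-1 + Real.cos (2 * π * k * l / ((19 * g : ℕ) : ℝ)))) := by
    rw [e, sum_insert (by simp)]
    simp [mul_assoc]
  rw [h0, xv_sum]
  simp only [term_eq g _ _ hg]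
  have rc : ∀ j ≤ 19, cc (19 - j) = cc j := by
    intro j hj; simpa using cc_refl 1 j hj
  have r18 : cc 18 = cc 1 := rc 1 (by norm_num)
  have r17 : cc 17 = cc 2 := rc 2 (by norm_num)
  have r16 : cc 16 = cc 3 := rc 3 (by norm_num)
  have r15 : cc 15 = cc 4 := rc 4 (by norm_num)
  have r14 : cc 14 = cc 5 := rc 5 (by norm_num)
  have r13 : cc 13 = cc 6 := rc 6 (by norm_num)
  have r0 : cc 0 = 1 := by simp [cc]
  obtain ⟨cn1, cn2⟩ := c_num
  rw [r18, r17, r16, r15, r14, r13, r0]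
  by_cases hd : g ∣ k
  · obtain ⟨k', rfl⟩ := hd
    have hk1 : 1 ≤ k' := Nat.pos_of_ne_zero (by rintro rfl; simp at hk)
    have hk2 : k' ≤ 18 := by
      by_contra hlt
      have : g * 19 ≤ g * k' := Nat.mul_le_mul_left g (by omega)
      omega
    have hc : ∀ a j : ℕ, Real.cos (2 * π * ((g * k' : ℕ) : ℝ) * ((19 * a + j : ℕ) : ℝ) / ((19 * g : ℕ) : ℝ))
        = cc (k' * j) := by
      intro a j
      unfold cc
      rw [← Real.cos_add_nat_mul_two_pi (2 * π * ((k' * j : ℕ) : ℝ) / 19) (k' * a)]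
      congr 1
      push_cast; field_simp; ring
    simp only [hc, ← sum_mul, cnt g m hm, cnt' g m hm, sum_const, card_range, nsmul_eq_mul]
    have q18 : cc (k' * 18) = cc (k' * 1) := cc_refl k' 1 (by norm_num)
    have q17 : cc (k' * 17) = cc (k' * 2) := cc_refl k' 2 (by norm_num)
    have q16 : cc (k' * 16) = cc (k' * 3) := cc_refl k' 3 (by norm_num)
    have q15 : cc (k' * 15) = cc (k' * 4) := cc_refl k' 4 (by norm_num)
    have q14 : cc (k' * 14) = cc (k' * 5) := cc_refl k' 5 (by norm_num)
    have q13 : cc (k' * 13) = cc (k' * 6) := cc_refl k' 6 (by norm_num)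
    rw [q18, q17, q16, q15, q14, q13, mul_zero, r0]
    by_cases hkk : k' = 1 ∨ k' = 18
    · have hj : ∀ j ≤ 19, cc (k' * j) = cc j := by
        intro j hj
        rcases hkk with rfl | rfl
        · rw [one_mul]
        · rw [mul_comm]; simpa using cc_refl j 1 (by norm_num)
      rw [hj 1 (by norm_num), hj 2 (by norm_num), hj 3 (by norm_num), hj 4 (by norm_num),
        hj 5 (by norm_num), hj 6 (by norm_num)]
      unfold ff at hmf
      linarith
    · have hkn := k_num k' (by omega) (by omega)
      have h6 : 0 ≤ cc 6 * (-1 + cc (k' * 6)) := by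
        have : cc (k' * 6) ≤ 1 := Real.cos_le_one _
        nlinarith
      have h7 : (m : ℝ) * (cc 6 * (-1 + cc (k' * 6))) ≤ g * (cc 6 * (-1 + cc (k' * 6))) := by gcongr
      have h8 := mul_neg_of_pos_of_neg hg' hkn
      linarith
  · have hz : ∀ j : ℕ, ∑ a ∈ range g, Real.cos (2 * π * k * ((19 * a + j : ℕ) : ℝ) / ((19 * g : ℕ) : ℝ)) = 0 := by
      intro j
      rw [← cos_sum_zero g k (2 * π * k * j / (19 * g)) hg hd]
      refine sum_congr rfl fun a _ => ?_
      congr 1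
      push_cast; field_simp
    have hfull : ∀ (c : ℝ) (j : ℕ), ∑ a ∈ range g, c * (-1 + Real.cos (2 * π * k * ((19 * a + j : ℕ) : ℝ) / ((19 * g : ℕ) : ℝ)))
        = - (g * c) := by
      intro c j
      rw [← mul_sum, sum_add_distrib, hz j]
      simp; ring
    have hpart : ∀ (P : ℕ → Prop) [DecidablePred P] (j : ℕ), ∑ a ∈ range g, (if P a then (1 : ℝ) else 0) * (cc 6 * (-1 + Real.cos (2 * π * k * ((19 * a + j : ℕ) : ℝ) / ((19 * g : ℕ) : ℝ))))
        ≤ g * (-2 * cc 6) := by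
      intro P _ j
      calc _ ≤ ∑ a ∈ range g, (-2 * cc 6) := by
            refine sum_le_sum fun a _ => ?_
            have h1 := Real.neg_one_le_cos (2 * π * k * ((19 * a + j : ℕ) : ℝ) / ((19 * g : ℕ) : ℝ))
            split_ifs
            · nlinarith
            · linarith
        _ = _ := by simp
    have p1 := hpart (fun a => a < m) 6
    have p2 := hpart (fun a => g - 1 - a < m) 13
    simp only [hfull]
    have h8 := mul_pos hg' cn1
    linarith

lemma xv_total (g m : ℕ) (hg : 0 < g) (hm : m ≤ g) :
    ∑ l ∈ Icc 1 (19 * g - 1), xv g m l = 11 * g - 1 + 2 * m := by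
  have e : range (19 * g) = insert 0 (Icc 1 (19 * g - 1)) := by
    ext j; simp only [mem_range, mem_insert, mem_Icc]; omega
  have h := xv_sum g m (fun _ => 1)
  simp only [mul_one, cnt g m hm, cnt' g m hm, sum_const, card_range, nsmul_eq_mul] at h
  rw [e, sum_insert (by simp)] at h
  have : xv g m 0 = 1 := by simp [xv]
  rw [this] at h
  linarith

lemma lower (b : ℝ) (hb0 : 0 ≤ b) (hb : b < muv) : ∃ (N p : ℕ) (x : ℕ → ℝ), 2 ≤ N ∧ 1 ≤ p ∧ p ≤ N / 2 ∧ feasible N p x ∧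
    b < (∑ l ∈ Icc 1 (N - 1), x l) / ((N : ℝ) - 1) := by
  obtain ⟨n1, n2, n3⟩ := ff_num
  obtain ⟨g, hg⟩ := exists_nat_gt (1 / (muv - b))
  have hmb : 0 < muv - b := by linarith
  have hg0' : (0 : ℝ) < g := lt_trans (by positivity) hg
  have hg0 : 0 < g := by exact_mod_cast hg0'
  have hg1 : (1 : ℝ) ≤ g := by exact_mod_cast hg0
  rw [div_lt_iff₀ hmb] at hg
  set t : ℝ := -(ff 1 + ff 2 + ff 3 + ff 4 + ff 5) / ff 6 with ht
  have hmu : 19 * muv = 11 + 2 * t := by rw [ht]; unfold muv; ring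
  obtain ⟨mu1, mu2⟩ := muv_num
  have t0 : 0 < t := by norm_num at *; linarith
  have t1 : t < 1 := by norm_num at *; linarith
  have htf : t * ff 6 = -(ff 1 + ff 2 + ff 3 + ff 4 + ff 5) := by rw [ht]; field_simp
  have htg : 0 < t * g := by positivity
  obtain ⟨m, hm⟩ : ∃ m : ℕ, ⌈t * g⌉₊ = m + 1 :=
    Nat.exists_eq_succ_of_ne_zero (Nat.ceil_pos.2 htg).ne'
  have hm1 : (m : ℝ) < t * g := by
    apply Nat.lt_ceil.1; omega
  have hm2 : t * g ≤ m + 1 := by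
    have := Nat.le_ceil (t * g); rw [hm] at this; exact_mod_cast this
  have hmg : m ≤ g := by
    have : (m : ℝ) < g := by nlinarith
    exact_mod_cast this.le
  refine ⟨19 * g, g, xv g m, by omega, hg0, by omega, xv_feasible g m hg0 hmg ?_, ?_⟩
  · have := mul_lt_mul_of_pos_right hm1 n3
    have e : t * g * ff 6 = g * (t * ff 6) := by ring
    rw [e, htf] at this
    linarith
  · rw [xv_total g m hg0 hmg]
    push_cast
    rw [lt_div_iff₀ (by linarith)]
    have h1 : 11 * (g : ℝ) + 2 * (t * g) = 19 * (muv * g) := by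
      have : (11 + 2 * t) * g = 19 * muv * g := by rw [hmu]
      linarith
    have e2 : b * (19 * g - 1) = 19 * (muv * g) - 19 * (g * (muv - b)) - b := by ring
    rw [e2]
    linarith

/-- Theorem 2 (supremum value of `μ^{(N,p)}`): the supremum of the connectivities of
feasible vectors, over all `N ≥ 2` and `1 ≤ p ≤ ⌊N/2⌋`, equals
`11/19 - (2/19) ⬝ (∑_{l=1}^{5} (-cos(2πl/19) + cos²(2πl/19))) / (-cos(12π/19) + cos²(12π/19))
 = 0.683875⋯`. -/
theorem sup_connectivity :
    sSup {μ : ℝ | ∃ (N p : ℕ) (x : ℕ → ℝ), 2 ≤ N ∧ 1 ≤ p ∧ p ≤ N / 2 ∧ feasible N p x ∧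
        μ = (∑ l ∈ Finset.Icc 1 (N - 1), x l) / ((N : ℝ) - 1)}
      = 11 / 19 - (2 / 19) *
          (∑ l ∈ Finset.Icc (1:ℕ) 5,
              (-Real.cos (2 * π * l / 19) + Real.cos (2 * π * l / 19) ^ 2)) /
          (-Real.cos (12 * π / 19) + Real.cos (12 * π / 19) ^ 2) ∧
    0.683875 ≤ (11 / 19 - (2 / 19) *
          (∑ l ∈ Finset.Icc (1:ℕ) 5,
              (-Real.cos (2 * π * l / 19) + Real.cos (2 * π * l / 19) ^ 2)) /
          (-Real.cos (12 * π / 19) + Real.cos (12 * π / 19) ^ 2) : ℝ) ∧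
    (11 / 19 - (2 / 19) *
          (∑ l ∈ Finset.Icc (1:ℕ) 5,
              (-Real.cos (2 * π * l / 19) + Real.cos (2 * π * l / 19) ^ 2)) /
          (-Real.cos (12 * π / 19) + Real.cos (12 * π / 19) ^ 2) : ℝ) < 0.683876 := by
  have e6 : -Real.cos (12 * π / 19) + Real.cos (12 * π / 19) ^ 2 = ff 6 := by
    unfold ff cc
    rw [show 2 * π * ((6 : ℕ) : ℝ) / 19 = 12 * π / 19 by push_cast; ring]
  have es : ∑ l ∈ Finset.Icc (1:ℕ) 5,
      (-Real.cos (2 * π * l / 19) + Real.cos (2 * π * l / 19) ^ 2)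
        = ff 1 + ff 2 + ff 3 + ff 4 + ff 5 := by
    rw [show Finset.Icc (1:ℕ) 5 = {1, 2, 3, 4, 5} by decide]
    simp only [ff, cc]
    simp
    ring
  rw [e6, es]
  refine ⟨?_, muv_num.1, muv_num.2⟩
  change _ = muv
  apply IsLUB.csSup_eq
  · constructor
    · rintro _ ⟨N, p, x, hN, hp, hpN, hx, rfl⟩
      exact upper hN hp hpN hx
    · intro b hb
      by_contra hlt
      obtain ⟨N, p, x, hN, hp, hpN, hx, h⟩ := lower (Max.max b 0) (le_max_right _ _)
        (max_lt (lt_of_not_ge hlt) (by have := muv_num.1; norm_num at this; linarith))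
      exact absurd (hb ⟨N, p, x, hN, hp, hpN, hx, rfl⟩) (not_le.2 ((le_max_left _ _).trans_lt h))
  · obtain ⟨N, p, x, hN, hp, hpN, hx, _⟩ := lower 0 le_rfl (by have := muv_num.1; norm_num at this; linarith)
    exact ⟨_, N, p, x, hN, hp, hpN, hx, rfl⟩
end

section
/- Let N ≥ 2 and 1 ≤ p ≤ ⌊N/2⌋ be integers, and define S^{(N,p)} = {l ∈ {1,…,N−1} : the fractional part of pl/N lies in [0,1/4] ∪ [3/4,1)}. Let x ∈ {0,1}^{N−1} satisfy x_l = x_{N−l} for all l and x_l = 1 for every l ∈ S^{(N,p)}. Then for every k ∈ {1,…,N−1} with N not dividing k − p and N not dividing k + p, one has ∑_{l=1}^{N−1} x_l·cos(2πpl/N)·(−1 + cos(2πkl/N)) ≤ 0. -/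
open Real Finset

lemma aux_sum (N : ℕ) (hN : 2 ≤ N) (m : ℤ) (hm : ¬ (N : ℤ) ∣ m) :
    ∑ l ∈ Finset.range N, Real.cos (2 * π * m * l / N) = 0 := by
  have hN0 : (N : ℝ) ≠ 0 := by positivity
  have h : ∀ k : ℤ, (2 * π * m / N : ℝ) ≠ k * (2 * π) := by
    intro k hk
    apply hm
    refine ⟨k, ?_⟩
    rw [div_eq_iff hN0] at hk
    have h3 : (2 * π) * (m : ℝ) = (2 * π) * (N * k) := by linarith
    have h4 := mul_left_cancel₀ (by positivity) h3
    exact_mod_cast h4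
  have h5 := Real.sin_mul_sum_cos N (2 * π * m / N) 0
  have h6 : Real.sin (2 * π * m / N / 2) ≠ 0 := by
    intro h0
    rw [Real.sin_eq_zero_iff] at h0
    obtain ⟨n, hn⟩ := h0
    exact h n (by linarith)
  have h7 : Real.sin (N * (2 * π * m / N) / 2) = 0 := by
    rw [Real.sin_eq_zero_iff]
    exact ⟨m, by field_simp⟩
  rw [h7] at h5
  have h8 := (mul_eq_zero.mp (h5.trans (by ring))).resolve_left h6
  rw [← h8]
  refine Finset.sum_congr rfl fun l _ => ?_
  congr 1
  ring

lemma aux_cos_s5 (t : ℝ) (h : 1 / 4 < Int.fract t) (h' : Int.fract t < 3 / 4) :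
    Real.cos (2 * π * t) ≤ 0 := by
  have e : 2 * π * t = 2 * π * Int.fract t + (⌊t⌋ : ℤ) * (2 * π) := by
    rw [← Int.self_sub_floor]; ring
  rw [e, Real.cos_add_int_mul_two_pi]
  have := Real.pi_pos
  apply Real.cos_nonpos_of_pi_div_two_le_of_le <;> nlinarith

/-- Let `S^{(N,p)} = {l ∈ {1,…,N-1} : {pl/N} ∈ [0,1/4] ∪ [3/4,1)}`. If `x ∈ {0,1}^{N-1}`
is symmetric (`x l = x (N-l)`) and `x l = 1` for every `l ∈ S^{(N,p)}`, then for every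
`k ∈ {1,…,N-1}` with `N ∤ k - p` and `N ∤ k + p`, one has `(L^{(N,p)} x)_k ≤ 0`. -/
theorem row_nonpos_of_S_filled (N p : ℕ) (hN : 2 ≤ N) (hp1 : 1 ≤ p) (hp2 : p ≤ N / 2)
    (x : ℕ → ℝ)
    (hx01 : ∀ l ∈ Finset.Icc 1 (N - 1), x l = 0 ∨ x l = 1)
    (hxsym : ∀ l ∈ Finset.Icc 1 (N - 1), x l = x (N - l))
    (hxS : ∀ l ∈ Finset.Icc 1 (N - 1),
      (Int.fract ((p : ℝ) * l / N) ≤ 1 / 4 ∨ 3 / 4 ≤ Int.fract ((p : ℝ) * l / N)) → x l = 1)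
    (k : ℕ) (hk : k ∈ Finset.Icc 1 (N - 1))
    (h1 : ¬ (N : ℤ) ∣ ((k : ℤ) - (p : ℤ))) (h2 : ¬ (N : ℤ) ∣ ((k : ℤ) + (p : ℤ))) :
    ∑ l ∈ Finset.Icc 1 (N - 1),
      x l * Real.cos (2 * π * p * l / N) * (-1 + Real.cos (2 * π * k * l / N)) ≤ 0 := by
  have hN0 : (N : ℝ) ≠ 0 := by positivity
  have hpN : ¬ (N : ℤ) ∣ (p : ℤ) := by
    intro h
    have := Int.le_of_dvd (by omega) h
    omega
  have a0 := aux_sum N hN p hpN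
  have a1 := aux_sum N hN _ h1
  have a2 := aux_sum N hN _ h2
  have hall : ∑ l ∈ Finset.range N,
      Real.cos (2 * π * p * l / N) * (-1 + Real.cos (2 * π * k * l / N)) = 0 := by
    have : ∀ l ∈ Finset.range N,
        Real.cos (2 * π * p * l / N) * (-1 + Real.cos (2 * π * k * l / N)) =
        (1 / 2) * Real.cos (2 * π * ((k : ℤ) - (p : ℤ) : ℤ) * l / N)
        + (1 / 2) * Real.cos (2 * π * ((k : ℤ) + (p : ℤ) : ℤ) * l / N)
        - Real.cos (2 * π * (p : ℤ) * l / N) := by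
      intro l _
      have e1 : (2 * π * ((k : ℤ) - (p : ℤ) : ℤ) * l / N : ℝ)
        = 2 * π * k * l / N - 2 * π * p * l / N := by push_cast; ring
      have e2 : (2 * π * ((k : ℤ) + (p : ℤ) : ℤ) * l / N : ℝ)
        = 2 * π * k * l / N + 2 * π * p * l / N := by push_cast; ring
      rw [e1, e2, Real.cos_sub, Real.cos_add, Int.cast_natCast]
      ring
    rw [Finset.sum_congr rfl this, Finset.sum_sub_distrib, Finset.sum_add_distrib,
      ← Finset.mul_sum, ← Finset.mul_sum, a0, a1, a2]
    ring
  have hsub : Finset.Icc 1 (N - 1) ⊆ Finset.range N := by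
    intro l hl
    simp only [Finset.mem_Icc, Finset.mem_range] at *
    omega
  rw [← Finset.sum_subset hsub] at hall
  · rw [← hall]
    refine Finset.sum_le_sum fun l hl => ?_
    have hc := Real.cos_le_one (2 * π * k * l / N)
    rcases hx01 l hl with h | h
    · have hn : Real.cos (2 * π * p * l / N) ≤ 0 := by
        have h3 : ¬ (Int.fract ((p : ℝ) * l / N) ≤ 1 / 4 ∨
            3 / 4 ≤ Int.fract ((p : ℝ) * l / N)) := by
          intro h4
          have := hxS l hl h4
          linarith
        push Not at h3
        have h5 := aux_cos_s5 _ h3.1 h3.2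
        rwa [show 2 * π * ((p : ℝ) * l / N) = 2 * π * p * l / N by ring] at h5
      rw [h]
      nlinarith
    · rw [h, one_mul]
  · intro l hl hl'
    have : l = 0 := by
      simp only [Finset.mem_Icc, Finset.mem_range] at *
      omega
    subst this
    simp
end

section
/- Let N ≥ 1 be an integer, let x : ℤ → ℝ be N-periodic with x_l = x_{N−l} for all l, and define a_{ij} = x_{j−i} for i,j ∈ {1,…,N}. Then for every integer p, the p-twisted state θ*, defined by θ*_j = 2πpj/N, is an equilibrium: for every i ∈ {1,…,N}, ∑_{j=1}^{N} a_{ij}·sin(θ*_j − θ*_i) = 0. -/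
open Real Finset

theorem aux_shift (N : ℕ) (g : ℤ → ℝ) (hp : ∀ l, g (l + N) = g l) (c : ℤ) :
    ∑ j ∈ Finset.range N, g (c + 1 + j) = ∑ j ∈ Finset.range N, g (c + j) := by
  have h1 := Finset.sum_range_succ (fun j : ℕ => g (c + j)) N
  have h2 := Finset.sum_range_succ' (fun j : ℕ => g (c + j)) N
  have h3 : ∑ j ∈ Finset.range N, g (c + 1 + j)
      = ∑ j ∈ Finset.range N, g (c + ((j + 1 : ℕ) : ℤ)) := by
    refine Finset.sum_congr rfl fun j _ => ?_
    congr 1; push_cast; ring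
  have h4 := hp c
  simp only [Nat.cast_zero, add_zero] at h2
  linarith

theorem aux_const (N : ℕ) (g : ℤ → ℝ) (hp : ∀ l, g (l + N) = g l) (c : ℤ) :
    ∑ j ∈ Finset.range N, g (c + j) = ∑ j ∈ Finset.range N, g (0 + j) := by
  induction c using Int.induction_on with
  | zero => rfl
  | succ k ih => rw [aux_shift N g hp, ih]
  | pred k ih =>
    rw [← ih, ← aux_shift N g hp]
    simp

theorem aux_zero (N : ℕ) (g : ℤ → ℝ) (hp : ∀ l, g (l + N) = g l)
    (ho : ∀ l, g (-l) = - g l) (c : ℤ) :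
    ∑ j ∈ Finset.range N, g (c + j) = 0 := by
  have h1 := aux_const N g hp 1
  have h2 := Finset.sum_range_reflect (fun j : ℕ => g (0 + j)) N
  have h3 : ∑ j ∈ Finset.range N, g (0 + ((N - 1 - j : ℕ) : ℤ))
      = - ∑ j ∈ Finset.range N, g (1 + j) := by
    rw [← Finset.sum_neg_distrib]
    refine Finset.sum_congr rfl fun j hj => ?_
    rw [← ho, ← hp]
    have := Finset.mem_range.1 hj
    rw [← hp (-(1 + (j : ℤ)))]
    rw [hp]
    congr 1
    omega
  rw [aux_const N g hp c]
  linarith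

/-- On a circulant network (`a_{ij} = x_{j-i}` with `x` `N`-periodic and symmetric),
every `p`-twisted state `θ*_j = 2πpj/N` is an equilibrium of the coupled identical
phase-oscillator system: `∑_{j=1}^N a_{ij} sin(θ*_j - θ*_i) = 0` for all `i`. -/
theorem twisted_state_equilibrium (N : ℕ) (hN : 1 ≤ N) (x : ℤ → ℝ)
    (hper : ∀ l : ℤ, x (l + N) = x l)
    (hsym : ∀ l : ℤ, x l = x ((N : ℤ) - l)) (p : ℤ) :
    ∀ i ∈ Finset.Icc 1 N, ∑ j ∈ Finset.Icc 1 N,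
      x ((j : ℤ) - (i : ℤ)) *
        Real.sin (2 * π * p * j / N - 2 * π * p * i / N) = 0 := by
  intro i _
  have hN0 : (N : ℝ) ≠ 0 := by positivity
  have key := aux_zero N (fun l => x l * Real.sin (2 * π * p * l / N)) ?_ ?_ (1 - i)
  · rw [← key, Finset.range_eq_Ico, ← Finset.Ico_add_one_right_eq_Icc,
      Finset.sum_Ico_eq_sum_range, Finset.range_eq_Ico]
    refine Finset.sum_congr (by simp) fun j _ => ?_
    have e : (((1 + j : ℕ) : ℤ) - (i : ℤ)) = 1 - i + j := by push_cast; ring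
    rw [e]
    congr 2
    push_cast
    ring
  · intro l
    simp only [hper]
    congr 1
    rw [← Real.sin_add_int_mul_two_pi (2 * π * p * l / N) p]
    congr 1
    push_cast
    field_simp
  · intro l
    have : x (-l) = x l := by rw [hsym l, ← hper (-l)]; congr 1; ring
    simp only [this]
    rw [← mul_neg, ← Real.sin_neg]
    congr 2
    push_cast
    ring
end

section
/- Let N ≥ 2 be an integer, let x : ℤ → ℝ be N-periodic with x_0 = 0 and x_l = x_{N−l} for all l, and let p be an integer. Define the N×N Jacobian matrix J of the p-twisted state by J_{ij} = x_{j−i}·cos(2πp(j−i)/N) for i ≠ j and J_{ii} = −∑_{k=1}^{N} x_{k−i}·cos(2πp(k−i)/N). Then for every k ∈ {1,…,N−1}, the vector v ∈ ℝ^N with v_j = cos(2πkj/N) satisfies J·v = λ_k·v, where λ_k = ∑_{l=1}^{N−1} x_l·cos(2πpl/N)·(−1 + cos(2πkl/N)). -/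
open Real Finset

lemma shift_one (N : ℕ) (f : ℤ → ℝ) (hf : ∀ l : ℤ, f (l + N) = f l) (a : ℤ) :
    ∑ j ∈ Finset.range N, f ((j : ℤ) + (a + 1)) = ∑ j ∈ Finset.range N, f ((j : ℤ) + a) := by
  have h1 := Finset.sum_range_succ (fun j : ℕ => f ((j : ℤ) + a)) N
  have h2 := Finset.sum_range_succ' (fun j : ℕ => f ((j : ℤ) + a)) N
  have h3 : f ((N : ℤ) + a) = f (((0 : ℕ) : ℤ) + a) := by
    rw [add_comm, hf]; simp
  have h4 : ∀ j : ℕ, f ((j : ℤ) + (a + 1)) = f (((j + 1 : ℕ) : ℤ) + a) := by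
    intro j; congr 1; push_cast; ring
  simp only [h4]
  linarith

lemma shift_sum (N : ℕ) (f : ℤ → ℝ) (hf : ∀ l : ℤ, f (l + N) = f l) (a : ℤ) :
    ∑ j ∈ Finset.range N, f ((j : ℤ) + a) = ∑ j ∈ Finset.range N, f (j : ℤ) := by
  induction a using Int.induction_on with
  | zero => simp
  | succ i ih => rw [shift_one N f hf, ih]
  | pred i ih =>
    rw [← ih, ← shift_one N f hf]; simp

lemma odd_sum (N : ℕ) (f : ℤ → ℝ) (hf : ∀ l : ℤ, f (l + N) = f l)
    (ho : ∀ l : ℤ, f (-l) = - f l) :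
    ∑ j ∈ Finset.range N, f (j : ℤ) = 0 := by
  have h1 := Finset.sum_range_reflect (fun j : ℕ => f (j : ℤ)) N
  have h2 := shift_sum N f hf (1 - N)
  have h3 : ∑ j ∈ Finset.range N, f ((N - 1 - j : ℕ) : ℤ)
      = - ∑ j ∈ Finset.range N, f ((j : ℤ) + (1 - N)) := by
    rw [← Finset.sum_neg_distrib]
    refine Finset.sum_congr rfl fun j hj => ?_
    rw [← ho]
    congr 1
    have := Finset.mem_range.mp hj
    omega
  linarith

lemma cos_per_s8 (N : ℕ) (hN : 2 ≤ N) (q l : ℤ) :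
    Real.cos (2 * π * q * ((l + N : ℤ) : ℝ) / N) = Real.cos (2 * π * q * (l : ℝ) / N) := by
  have hN0 : (N : ℝ) ≠ 0 := by positivity
  rw [← Real.cos_add_int_mul_two_pi (2 * π * q * (l : ℝ) / N) q]
  congr 1
  push_cast
  field_simp

lemma sin_per (N : ℕ) (hN : 2 ≤ N) (q l : ℤ) :
    Real.sin (2 * π * q * ((l + N : ℤ) : ℝ) / N) = Real.sin (2 * π * q * (l : ℝ) / N) := by
  have hN0 : (N : ℝ) ≠ 0 := by positivity
  rw [← Real.sin_add_int_mul_two_pi (2 * π * q * (l : ℝ) / N) q]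
  congr 1
  push_cast
  field_simp

/-- The Jacobian of the `p`-twisted state on a circulant network has eigenvectors
`v_j = cos(2πkj/N)` with eigenvalues
`λ_k = ∑_{l=1}^{N-1} x_l cos(2πpl/N)(-1 + cos(2πkl/N))` for `k ∈ {1,…,N-1}`. -/
theorem jacobian_eigen (N : ℕ) (hN : 2 ≤ N) (x : ℤ → ℝ)
    (hper : ∀ l : ℤ, x (l + N) = x l) (h0 : x 0 = 0)
    (hsym : ∀ l : ℤ, x l = x ((N : ℤ) - l)) (p : ℤ)
    (J : ℕ → ℕ → ℝ)
    (hJoff : ∀ i j : ℕ, i ≠ j →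
      J i j = x ((j : ℤ) - (i : ℤ)) * Real.cos (2 * π * p * ((j : ℝ) - (i : ℝ)) / N))
    (hJdiag : ∀ i : ℕ,
      J i i = -∑ k ∈ Finset.Icc 1 N,
        x ((k : ℤ) - (i : ℤ)) * Real.cos (2 * π * p * ((k : ℝ) - (i : ℝ)) / N))
    (k : ℕ) (hk : k ∈ Finset.Icc 1 (N - 1)) :
    ∀ i ∈ Finset.Icc 1 N,
      ∑ j ∈ Finset.Icc 1 N, J i j * Real.cos (2 * π * k * j / N)
        = (∑ l ∈ Finset.Icc 1 (N - 1),
            x l * Real.cos (2 * π * p * l / N) * (-1 + Real.cos (2 * π * k * l / N)))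
          * Real.cos (2 * π * k * i / N) := by
  intro i hi
  have hN0 : (N : ℝ) ≠ 0 := by positivity
  have heven : ∀ l : ℤ, x (-l) = x l := by
    intro l
    rw [hsym (-l), ← hper l]; congr 1; ring
  let c : ℤ → ℝ := fun l => x l * Real.cos (2 * π * p * (l : ℝ) / N)
  let C : ℤ → ℝ := fun l => Real.cos (2 * π * (k : ℤ) * (l : ℝ) / N)
  let S : ℤ → ℝ := fun l => Real.sin (2 * π * (k : ℤ) * (l : ℝ) / N)
  have hc : ∀ l : ℤ, c (l + N) = c l := by
    intro l; simp only [c]; rw [hper, cos_per_s8 N hN]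
  have hC : ∀ l : ℤ, C (l + N) = C l := fun l => cos_per_s8 N hN k l
  have hS : ∀ l : ℤ, S (l + N) = S l := fun l => sin_per N hN k l
  have hc0 : c 0 = 0 := by simp [c, h0]
  have hcn : ∀ l : ℤ, c (-l) = c l := by
    intro l; simp only [c]; rw [heven, ← Real.cos_neg]; congr 2; push_cast; ring
  have hSn : ∀ l : ℤ, S (-l) = - S l := by
    intro l; simp only [S]; rw [← Real.sin_neg]; congr 1; push_cast; ring
  have hadd : ∀ l m : ℤ, C (l + m) = C l * C m - S l * S m := by
    intro l m; simp only [C, S]; rw [← Real.cos_add]; congr 1; push_cast; ring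
  have hCN : ∀ j : ℕ, Real.cos (2 * π * k * j / N) = C j := by intro j; simp [C]
  have hdiag' : J i i = -∑ j ∈ Finset.Icc 1 N, c ((j : ℤ) - i) := by
    rw [hJdiag]; simp [c]
  have hL : ∑ j ∈ Finset.Icc 1 N, J i j * Real.cos (2 * π * k * j / N)
      = ∑ j ∈ Finset.Icc 1 N, c ((j : ℤ) - i) * (C j - C i) := by
    have e : ∀ j ∈ Finset.Icc 1 N, J i j * Real.cos (2 * π * k * j / N)
        = c ((j : ℤ) - i) * C j + (if i = j then J i i * C i else 0) := by
      intro j _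
      rw [hCN]
      split_ifs with h
      · subst h; simp [hc0]
      · rw [hJoff i j h]; simp [c]
    rw [Finset.sum_congr rfl e, Finset.sum_add_distrib, Finset.sum_ite_eq, if_pos hi, hdiag']
    simp only [mul_sub, Finset.sum_sub_distrib, ← Finset.sum_mul]
    ring
  have hIcc : ∀ (M : ℕ) (f : ℕ → ℝ), ∑ j ∈ Finset.Icc 1 M, f j
      = ∑ j ∈ Finset.range M, f (j + 1) := by
    intro M f
    rw [Finset.range_eq_Ico, Finset.sum_Ico_add' f 0 M 1]
    rfl
  let g : ℤ → ℝ := fun l => c l * (C (l + i) - C i)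
  have hg : ∀ l : ℤ, g (l + N) = g l := by
    intro l; simp only [g]
    rw [hc, show l + (N : ℤ) + i = (l + i) + N by ring, hC]
  have hL2 : ∑ j ∈ Finset.Icc 1 N, c ((j : ℤ) - i) * (C j - C i)
      = ∑ j ∈ Finset.range N, g j := by
    rw [hIcc, ← shift_sum N g hg (1 - i)]
    refine Finset.sum_congr rfl fun j _ => ?_
    simp only [g]
    congr 2
    · push_cast; ring
    · congr 1; push_cast; ring
  have hodd : ∑ j ∈ Finset.range N, c j * S j = 0 := by
    refine odd_sum N (fun l => c l * S l) ?_ ?_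
    · intro l; simp only [hc, hS]
    · intro l; simp only [hcn, hSn]; ring
  have hg2 : ∑ j ∈ Finset.range N, g j
      = (∑ j ∈ Finset.range N, c j * (-1 + C j)) * C i := by
    have e : ∀ j : ℕ, g j = c j * (-1 + C j) * C i - c j * S j * S i := by
      intro j; simp only [g]; rw [hadd]; ring
    simp only [e, Finset.sum_sub_distrib, ← Finset.sum_mul, hodd]
    ring
  have hR : ∑ j ∈ Finset.range N, c j * (-1 + C j)
      = ∑ j ∈ Finset.Icc 1 (N - 1), c j * (-1 + C j) := by
    obtain ⟨M, rfl⟩ : ∃ M, N = M + 1 := ⟨N - 1, by omega⟩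
    rw [hIcc, Finset.sum_range_succ']
    simp [hc0]
  rw [hL, hL2, hg2, hR, hCN]
  simp [c, C]
end

section
/- Let N ≥ 2 and 1 ≤ p ≤ ⌊N/2⌋ be integers and set m = gcd(N,p). Then the set of achievable values {∑_{l=1}^{N−1} x_l : x feasible for (N,p)} equals the set {∑_{l=1}^{N−1} x_l : x feasible for (N,m)}. In particular, the maximum connectivities for (N,p) and (N,m) coincide whenever either feasible set is nonempty. -/
open Real Finset

lemma cos_modEq {N a b : ℕ} (hN : 2 ≤ N) (h : a ≡ b [MOD N]) :
    Real.cos (2 * π * a / N) = Real.cos (2 * π * b / N) := by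
  obtain ⟨c, hc⟩ := (Nat.modEq_iff_dvd.mp h)
  have hN0 : (N : ℝ) ≠ 0 := by positivity
  have hb : (b : ℝ) = a + N * c := by
    have : (b : ℤ) = a + N * c := by linarith
    exact_mod_cast this
  have : 2 * π * b / N = 2 * π * a / N + c * (2 * π) := by
    rw [hb]; field_simp
  rw [this, Real.cos_add_int_mul_two_pi]

lemma mulmod_mem {N u v l : ℕ} (hN : 2 ≤ N) (huv : v * u ≡ 1 [MOD N])
    (hl : l ∈ Finset.Icc 1 (N - 1)) : u * l % N ∈ Finset.Icc 1 (N - 1) := by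
  rw [Finset.mem_Icc] at *
  have h1 : u * l % N < N := Nat.mod_lt _ (by omega)
  have h2 : u * l % N ≠ 0 := by
    intro h
    have h0 : u * l ≡ 0 [MOD N] := by simpa [Nat.ModEq] using h
    have h3 : v * u * l ≡ 0 [MOD N] := by
      rw [mul_assoc]; simpa using h0.mul_left v
    have h4 : l ≡ 0 [MOD N] := by
      have := (huv.mul_right l).symm.trans h3
      simpa using this
    have := Nat.le_of_dvd (by omega) ((Nat.modEq_zero_iff_dvd).mp h4)
    omega
  omega

lemma mulmod_inv {N u v l : ℕ} (hN : 2 ≤ N) (huv : v * u ≡ 1 [MOD N])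
    (hl : l ∈ Finset.Icc 1 (N - 1)) : v * (u * l % N) % N = l := by
  rw [Finset.mem_Icc] at *
  have h : v * (u * l % N) ≡ l [MOD N] := by
    have h1 : v * (u * l % N) ≡ v * (u * l) [MOD N] := (Nat.mod_modEq _ _).mul_left v
    have h2 := huv.mul_right l
    rw [mul_assoc, one_mul] at h2
    exact h1.trans h2
  have h3 : v * (u * l % N) % N = l % N := h
  rw [h3, Nat.mod_eq_of_lt (by omega)]

lemma sum_mulmod {N u v : ℕ} (hN : 2 ≤ N) (huv : v * u ≡ 1 [MOD N]) (f : ℕ → ℝ) :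
    ∑ l ∈ Finset.Icc 1 (N - 1), f (u * l % N) = ∑ l ∈ Finset.Icc 1 (N - 1), f l := by
  have hvu : u * v ≡ 1 [MOD N] := by rwa [mul_comm]
  exact Finset.sum_nbij' (fun l => u * l % N) (fun l => v * l % N)
    (fun l hl => mulmod_mem hN huv hl) (fun l hl => mulmod_mem hN hvu hl)
    (fun l hl => mulmod_inv hN huv hl) (fun l hl => mulmod_inv hN hvu hl)
    (fun l hl => rfl)

lemma transfer {N u v p m : ℕ} (hN : 2 ≤ N) (huv : v * u ≡ 1 [MOD N])
    (hpm : p ≡ m * u [MOD N]) {y : ℕ → ℝ} (hy : feasible N m y) :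
    ∃ x, feasible N p x ∧
      ∑ l ∈ Finset.Icc 1 (N - 1), y l = ∑ l ∈ Finset.Icc 1 (N - 1), x l := by
  have hvu : u * v ≡ 1 [MOD N] := by rwa [mul_comm]
  obtain ⟨h1, h2, h3⟩ := hy
  refine ⟨fun l => y (u * l % N), ⟨?_, ?_, ?_⟩, (sum_mulmod hN huv y).symm⟩
  · exact fun l hl => h1 _ (mulmod_mem hN huv hl)
  · intro l hl
    have hm1 := mulmod_mem hN huv hl
    have hl' : N - l ∈ Finset.Icc 1 (N - 1) := by
      rw [Finset.mem_Icc] at *; omega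
    have hm2 := mulmod_mem hN huv hl'
    change y (u * l % N) = y (u * (N - l) % N)
    rw [h2 _ hm1]
    congr 1
    rw [Finset.mem_Icc] at hm1 hm2 hl
    have hs : (u * l % N + u * (N - l) % N) % N = 0 := by
      rw [← Nat.add_mod, ← mul_add, Nat.add_sub_cancel' (by omega)]
      simp
    obtain ⟨c, hc⟩ := Nat.dvd_of_mod_eq_zero hs
    have hc1 : c = 1 := by
      rcases c with _ | _ | c
      · omega
      · rfl
      · exfalso; nlinarith [Nat.zero_le (N * c), (by omega : u * l % N < N), (by omega : u * (N - l) % N < N)]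
    subst hc1
    omega
  · intro k hk
    have h4 := h3 _ (mulmod_mem hN hvu hk)
    rw [← sum_mulmod hN huv] at h4
    refine lt_of_eq_of_lt (Finset.sum_congr rfl fun l hl => ?_) h4
    have e1 : p * l ≡ m * (u * l % N) [MOD N] := by
      have a := hpm.mul_right l
      rw [mul_assoc] at a
      exact a.trans ((Nat.mod_modEq _ _).mul_left m).symm
    have e2 : k * l ≡ (v * k % N) * (u * l % N) [MOD N] := by
      have a := (huv.mul_right (k * l)).symm
      rw [one_mul] at a
      have b := ((Nat.mod_modEq (v * k) N).mul (Nat.mod_modEq (u * l) N)).symm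
      refine a.trans (Nat.ModEq.trans ?_ b)
      rw [show v * u * (k * l) = v * k * (u * l) by ring]
    have c1 := cos_modEq hN e1
    have c2 := cos_modEq hN e2
    push_cast only [Nat.cast_mul, ← mul_assoc] at c1 c2
    rw [c1, c2]

lemma exists_unit_gcd {N p : ℕ} (hN : 2 ≤ N) :
    ∃ u v : ℕ, v * u ≡ 1 [MOD N] ∧ p ≡ Nat.gcd N p * u [MOD N] := by
  have : NeZero N := ⟨by omega⟩
  obtain ⟨d, hd, u, hu, h⟩ := ZMod.eq_unit_mul_divisor (p : ZMod N)
  obtain ⟨u, rfl⟩ := hu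
  refine ⟨(u : ZMod N).val, ((u⁻¹ : (ZMod N)ˣ) : ZMod N).val, ?_, ?_⟩
  · rw [← ZMod.natCast_eq_natCast_iff]; simp
  · have hp : p ≡ d * (u : ZMod N).val [MOD N] := by
      rw [← ZMod.natCast_eq_natCast_iff]; simp [h, mul_comm]
    have hg : Nat.gcd N p = d := by
      have e : Nat.gcd N p = Nat.gcd N (d * (u : ZMod N).val) := by
        rw [Nat.gcd_comm, hp.gcd_eq, Nat.gcd_comm]
      have hc : Nat.Coprime N (u : ZMod N).val := (ZMod.val_coe_unit_coprime u).symm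
      rw [e, hc.symm.gcd_mul_right_cancel_right, Nat.gcd_eq_right hd]
    rw [hg]; exact hp

/-- With `m = gcd(N, p)`, the achievable values `∑_{l=1}^{N-1} x_l` over feasible vectors
for `(N, p)` are the same as those over feasible vectors for `(N, m)`. -/
theorem achievable_eq_gcd (N p : ℕ) (hN : 2 ≤ N) (hp1 : 1 ≤ p) (hp2 : p ≤ N / 2)
    (m : ℕ) (hm : m = Nat.gcd N p) :
    {S : ℝ | ∃ x : ℕ → ℝ, feasible N p x ∧ S = ∑ l ∈ Finset.Icc 1 (N - 1), x l}
      = {S : ℝ | ∃ x : ℕ → ℝ, feasible N m x ∧ S = ∑ l ∈ Finset.Icc 1 (N - 1), x l} := by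
  subst hm
  obtain ⟨u, v, huv, hpm⟩ := exists_unit_gcd (p := p) hN
  have hvu : u * v ≡ 1 [MOD N] := by rwa [mul_comm]
  have hmp : Nat.gcd N p ≡ p * v [MOD N] := by
    have a := hpm.mul_right v
    rw [mul_assoc] at a
    have b := hvu.mul_left (Nat.gcd N p)
    rw [mul_one] at b
    exact (a.trans b).symm
  ext S
  constructor
  · rintro ⟨x, hx, rfl⟩
    exact transfer hN hvu hmp hx
  · rintro ⟨x, hx, rfl⟩
    exact transfer hN huv hpm hx
end

section
/- Let N ≥ 5 be an integer. Then the maximum of the set {(∑_{l=1}^{N−1} x_l)/(N−1) : x feasible for (N,1)} equals 2(k_c(N) − 1)/(N−1), where k_c(N) is the least k ∈ {1,…,N−1} with s_k = ∑_{l=1}^{k} cos(2πl/N)·(−1 + cos(2πl/N)) ≥ 0; in particular the feasible set is nonempty and the maximum is attained. -/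
open Real Finset

lemma fold_odd (M : ℕ) (g : ℕ → ℝ) (hg : ∀ l ∈ Finset.Icc 1 (2*M), g l = g (2*M+1-l)) :
    ∑ l ∈ Finset.Icc 1 (2*M), g l = 2 * ∑ l ∈ Finset.Icc 1 M, g l := by
  have hd : Finset.Icc 1 (2*M) = Finset.Icc 1 M ∪ Finset.Icc (M+1) (2*M) := by
    ext l; simp only [Finset.mem_union, Finset.mem_Icc]; omega
  rw [hd, Finset.sum_union (by
    rw [Finset.disjoint_left]; intro l; simp only [Finset.mem_Icc]; omega), two_mul (∑ l ∈ Finset.Icc 1 M, g l)]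
  congr 1
  apply Finset.sum_bij' (fun l _ => 2*M+1-l) (fun l _ => 2*M+1-l)
  · intro l; simp only [Finset.mem_Icc]; omega
  · intro l; simp only [Finset.mem_Icc]; omega
  · intro l; simp only [Finset.mem_Icc]; omega
  · intro l; simp only [Finset.mem_Icc]; omega
  · intro l hl
    apply hg
    simp only [Finset.mem_Icc] at hl ⊢; omega

lemma fold_even (M : ℕ) (g : ℕ → ℝ) (hg : ∀ l ∈ Finset.Icc 1 (2*M+1), g l = g (2*M+2-l)) :
    ∑ l ∈ Finset.Icc 1 (2*M+1), g l = 2 * ∑ l ∈ Finset.Icc 1 M, g l + g (M+1) := by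
  have hd : Finset.Icc 1 (2*M+1) = (Finset.Icc 1 M ∪ Finset.Icc (M+2) (2*M+1)) ∪ {M+1} := by
    ext l; simp only [Finset.mem_union, Finset.mem_Icc, Finset.mem_singleton]; omega
  rw [hd, Finset.sum_union (by
    rw [Finset.disjoint_left]; intro l
    simp only [Finset.mem_Icc, Finset.mem_union, Finset.mem_singleton]; omega),
    Finset.sum_union (by
    rw [Finset.disjoint_left]; intro l; simp only [Finset.mem_Icc]; omega), two_mul (∑ l ∈ Finset.Icc 1 M, g l),
    Finset.sum_singleton]
  congr 2
  apply Finset.sum_bij' (fun l _ => 2*M+2-l) (fun l _ => 2*M+2-l)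
  · intro l; simp only [Finset.mem_Icc]; omega
  · intro l; simp only [Finset.mem_Icc]; omega
  · intro l; simp only [Finset.mem_Icc]; omega
  · intro l; simp only [Finset.mem_Icc]; omega
  · intro l hl
    apply hg
    simp only [Finset.mem_Icc] at hl ⊢; omega

lemma dirichlet (m : ℕ) (t : ℝ) :
    sin t * (2 * ∑ l ∈ Finset.Icc 1 m, cos (2 * l * t) + 1) = sin ((2*m+1)*t) := by
  induction m with
  | zero => simp
  | succ n ih =>
    rw [Finset.sum_Icc_succ_top (by omega)]
    have e1 : (2*((n+1 : ℕ):ℝ)+1)*t = 2*((n+1 : ℕ):ℝ)*t + t := by ring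
    have e2 : (2*(n:ℝ)+1)*t = 2*((n+1 : ℕ):ℝ)*t - t := by push_cast; ring
    rw [e1, sin_add]
    rw [e2, sin_sub] at ih
    linarith

/-- closed form -/
lemma closed (m : ℕ) (h : ℝ) (h0 : sin h ≠ 0) (h1 : cos h ≠ 0) :
    ∑ l ∈ Finset.Icc 1 m, cos (2*l*h) * (-1 + cos (2*l*h)) =
      (2*m+1)/4 + sin (2*((2*m+1)*h)) / (8 * (sin h * cos h)) - sin ((2*m+1)*h) / (2 * sin h) := by
  have d1 := dirichlet m h
  have d2 := dirichlet m (2*h)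
  have e : (2*(m:ℝ)+1)*(2*h) = 2*((2*m+1)*h) := by ring
  rw [e, sin_two_mul h] at d2
  have e3 : ∑ l ∈ Finset.Icc 1 m, cos (2*l*h) * (-1 + cos (2*l*h)) =
      (m + ∑ l ∈ Finset.Icc 1 m, cos (2*l*(2*h)))/2 - ∑ l ∈ Finset.Icc 1 m, cos (2*l*h) := by
    have : ∀ l ∈ Finset.Icc 1 m, cos (2*l*h) * (-1 + cos (2*l*h)) =
        1/2 + (1/2) * cos (2*l*(2*h)) - cos (2*l*h) := by
      intro l _
      have : 2*(l:ℝ)*(2*h) = 2*(2*l*h) := by ring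
      rw [this, cos_two_mul]; ring
    rw [Finset.sum_congr rfl this, Finset.sum_sub_distrib, Finset.sum_add_distrib,
      ← Finset.mul_sum]
    simp; ring
  rw [e3, ← d1, ← d2]
  generalize ∑ l ∈ Finset.Icc 1 m, cos (2*l*(2*h)) = A
  generalize ∑ l ∈ Finset.Icc 1 m, cos (2*l*h) = B
  field_simp
  ring

lemma sin_low (h : ℝ) (h0 : 0 < h) : h * (1 - h^2/4) ≤ sin h := by
  have := Real.sin_gt_sub_cube h0
  have := pow_pos h0 3
  nlinarith

/-- key estimate for feasibility -/
lemma key_sin (m : ℕ) (h : ℝ) (h0 : 0 < h) (h1 : h ≤ π/5)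
    (hl : π/2 - h ≤ (2*m+1)*h) (hu : (2*m+1)*h ≤ π)
    (hs : ∑ l ∈ Finset.Icc 1 m, cos (2*l*h) * (-1 + cos (2*l*h)) < 0) :
    1 < 2 * cos h * sin ((2*m+1)*h) := by
  have p1 := Real.pi_gt_d4
  have p2 := Real.pi_lt_d4
  have s5 : (2.236:ℝ) < √5 := by
    rw [Real.lt_sqrt (by norm_num)]; norm_num
  have hc : 0.809 ≤ cos h := by
    have : cos (π/5) ≤ cos h := Real.cos_le_cos_of_nonneg_of_le_pi h0.le (by linarith) h1
    rw [Real.cos_pi_div_five] at this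
    linarith
  have hsin : h * (1 - h^2/4) ≤ sin h := sin_low h h0
  have hh : h^2 ≤ 0.395 := by nlinarith
  have hsin' : 0.901*h ≤ sin h := by nlinarith
  have hsp : 0 < sin h := by linarith
  rw [closed m h hsp.ne' (by linarith)] at hs
  set ψ := (2*(m:ℝ)+1)*h with hψ
  by_contra hcon
  push Not at hcon
  have hsp0 : 0 ≤ sin ψ := Real.sin_nonneg_of_nonneg_of_le_pi (by positivity) hu
  have hsu : sin ψ ≤ 0.6181 := by nlinarith
  have hψ2 : 3*π/4 < ψ := by
    by_contra hle
    push Not at hle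
    by_cases hp : ψ ≤ π/2
    · have : sin (π/2 - h) ≤ sin ψ := Real.sin_le_sin_of_le_of_le_pi_div_two (by linarith) hp hl
      rw [Real.sin_pi_div_two_sub] at this
      linarith
    · push Not at hp
      have : sin (π/4) ≤ sin (π - ψ) :=
        Real.sin_le_sin_of_le_of_le_pi_div_two (by linarith) (by linarith) (by linarith)
      rw [Real.sin_pi_sub, Real.sin_pi_div_four] at this
      have s2 : (1.4:ℝ) < √2 := by
        rw [Real.lt_sqrt (by norm_num)]; norm_num
      linarith
  have hcp : 0 < cos h := by linarith
  have e : (2*(m:ℝ)+1) = ψ/h := by rw [hψ]; field_simp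
  rw [e, sin_two_mul] at hs
  have e2 : ψ / h / 4 + 2 * sin ψ * cos ψ / (8 * (sin h * cos h)) - sin ψ / (2 * sin h)
    = (ψ * (sin h * cos h) - h * sin ψ * (2 * cos h - cos ψ)) / (4 * h * (sin h * cos h)) := by
    field_simp; ring
  rw [e2] at hs
  have hs2 : ψ * (sin h * cos h) - h * sin ψ * (2 * cos h - cos ψ) < 0 := by
    by_contra hge
    push Not at hge
    have := div_nonneg hge (by positivity : 0 ≤ 4 * h * (sin h * cos h))
    linarith
  have hcψ : -1 ≤ cos ψ := Real.neg_one_le_cos ψ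
  have a1 : h * sin ψ * (2 * cos h - cos ψ) ≤ h * sin ψ * (2 * cos h + 1) := by
    apply mul_le_mul_of_nonneg_left (by linarith) (by positivity)
  have a2 : sin ψ * (2 * cos h + 1) ≤ 1.6181 := by nlinarith
  have a3 : 2.356 * (0.901 * h * 0.809) ≤ ψ * (sin h * cos h) := by
    apply mul_le_mul (by linarith) _ (by positivity) (by linarith)
    apply mul_le_mul hsin' hc (by norm_num) hsp.le
  nlinarith

lemma mid_est (m : ℕ) (h : ℝ) (h0 : 0 < h) (h1 : h ≤ π/6)
    (hl : 7*π/10 ≤ (2*m+2)*h) (hu : (2*m+1)*h ≤ π) :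
    -1 ≤ ∑ l ∈ Finset.Icc 1 m, cos (2*l*h) * (-1 + cos (2*l*h)) := by
  have p1 := Real.pi_gt_d4
  have p2 := Real.pi_lt_d4
  have s5 : √5 < (2.2361:ℝ) := by
    rw [Real.sqrt_lt' (by norm_num)]; norm_num
  have hsin : h * (1 - h^2/4) ≤ sin h := sin_low h h0
  have hcos := Real.one_sub_sq_div_two_le_cos (x := h)
  have hh : h ≤ 0.5236 := by linarith
  have hh2 : h^2 ≤ 0.5236 * h := by nlinarith
  have hsp : 0 < sin h := Real.sin_pos_of_pos_of_lt_pi h0 (by linarith)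
  have hcp : 0 < cos h := Real.cos_pos_of_mem_Ioo ⟨by linarith, by linarith⟩
  have hs' : h * (1 - 0.1309*h) ≤ sin h := by nlinarith
  have hc' : 1 - 0.2618*h ≤ cos h := by nlinarith
  have hA : 1 / sin h ≤ (1+h/7)/h := by
    rw [div_le_div_iff₀ hsp h0]
    have : h ≤ (1+h/7) * (h * (1 - 0.1309*h)) := by nlinarith [mul_pos h0 h0]
    nlinarith
  have hC : 1 / cos h ≤ 1 + 0.31*h := by
    rw [div_le_iff₀ hcp]
    nlinarith [mul_pos h0 h0]
  have hB : 1 / (sin h * cos h) ≤ (1+0.48*h)/h := by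
    have : 1 / (sin h * cos h) = (1/sin h) * (1/cos h) := by field_simp
    rw [this]
    calc _ ≤ (1+h/7)/h * (1 + 0.31*h) := mul_le_mul hA hC (by positivity) (by positivity)
      _ = (1+h/7)*(1 + 0.31*h)/h := by ring
      _ ≤ _ := by
        apply div_le_div_of_nonneg_right _ h0.le
        nlinarith
  rw [closed m h hsp.ne' hcp.ne']
  set ψ := (2*(m:ℝ)+1)*h with hψ
  have e : (2*(m:ℝ)+1) = ψ/h := by rw [hψ]; field_simp
  have hsp0 : 0 ≤ sin ψ := Real.sin_nonneg_of_nonneg_of_le_pi (by positivity) hu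
  have hθ : sin (7*π/10) ≤ 0.8091 := by
    have : 7*π/10 = π/5 + π/2 := by ring
    rw [this, Real.sin_add_pi_div_two, Real.cos_pi_div_five]
    linarith
  have hl2 : 7*π/10 - h ≤ ψ := by rw [hψ]; linarith
  have hsu : sin ψ ≤ 0.8091 + h := by
    by_cases hp : 7*π/10 ≤ ψ
    · have : sin (π - ψ) ≤ sin (π - 7*π/10) :=
        Real.sin_le_sin_of_le_of_le_pi_div_two (by linarith) (by linarith) (by linarith)
      rw [Real.sin_pi_sub, Real.sin_pi_sub] at this
      linarith
    · push Not at hp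
      have h3 := Real.abs_sin_sub_sin_le ψ (7*π/10)
      have h4 : |ψ - 7*π/10| ≤ h := by rw [abs_le]; constructor <;> linarith
      have := le_abs_self (sin ψ - sin (7*π/10))
      linarith
  have hsu1 : sin ψ ≤ 1 := Real.sin_le_one ψ
  have b1 : -((1+0.48*h)/h/8) ≤ sin (2*ψ) / (8 * (sin h * cos h)) := by
    have : sin (2*ψ) / (8 * (sin h * cos h)) = sin (2*ψ) * (1/(sin h * cos h)) / 8 := by field_simp
    rw [this]
    have := Real.neg_one_le_sin (2*ψ)
    have h5 : 0 < 1 / (sin h * cos h) := by positivity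
    nlinarith
  have b2 : sin ψ / (2 * sin h) ≤ sin ψ * ((1+h/7)/h) / 2 := by
    have : sin ψ / (2 * sin h) = sin ψ * (1/sin h) / 2 := by field_simp
    rw [this]
    have := mul_le_mul_of_nonneg_left hA hsp0
    linarith
  rw [e]
  have b3 : -1 ≤ ψ/h/4 - (1+0.48*h)/h/8 - sin ψ * ((1+h/7)/h) / 2 := by
    have : ψ/h/4 - (1+0.48*h)/h/8 - sin ψ * ((1+h/7)/h) / 2
      = (ψ - (1+0.48*h)/2 - 2 * sin ψ * (1+h/7)) / (4*h) := by field_simp; ring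
    rw [this, le_div_iff₀ (by positivity)]
    nlinarith
  linarith

lemma core_half (N m k : ℕ) (h : ℝ) (hN : 5 ≤ N) (hh : (N:ℝ) * h = π) (hl : N ≤ 4*(m+1))
    (hu : 2*(m+1)+1 ≤ N)
    (hs : ∑ l ∈ Finset.Icc 1 m, cos (2*l*h) * (-1 + cos (2*l*h)) < 0)
    (hk1 : 1 ≤ k) (hk2 : 2*k ≤ N) :
    ∑ l ∈ Finset.Icc 1 m, cos (2*l*h) * (-1 + cos (2*k*l*h)) < 0 := by
  rcases Nat.lt_or_ge k 2 with hk | hk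
  · obtain rfl : k = 1 := by omega
    simpa using hs
  have hpi := Real.pi_pos
  have hNr : (5:ℝ) ≤ N := by exact_mod_cast hN
  have h0 : 0 < h := by
    by_contra hc
    push Not at hc
    nlinarith
  have h1 : h ≤ π/5 := by nlinarith
  have hlr : (N:ℝ) ≤ 4*(m+1) := by exact_mod_cast hl
  have hur : 2*((m:ℝ)+1)+1 ≤ N := by exact_mod_cast hu
  have key := key_sin m h h0 h1 (by nlinarith) (by nlinarith) hs
  have d1 := dirichlet m h
  have hs2 : 0 < sin (2*h) := Real.sin_pos_of_pos_of_lt_pi (by linarith) (by linarith)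
  have main : ∀ j : ℕ, 2 ≤ j → j + 2 ≤ N →
      ∑ l ∈ Finset.Icc 1 m, cos (2*l*(j*h)) < ∑ l ∈ Finset.Icc 1 m, cos (2*l*h) := by
    intro j hj1 hj2
    have d := dirichlet m (j*h)
    have hj1r : (2:ℝ) ≤ j := by exact_mod_cast hj1
    have hj2r : (j:ℝ) + 2 ≤ N := by exact_mod_cast hj2
    have b1 : 2*h ≤ j*h := by nlinarith
    have b2 : j*h ≤ π - 2*h := by nlinarith
    have hsj : sin (2*h) ≤ sin (j*h) := by
      by_cases hp : j*h ≤ π/2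
      · exact Real.sin_le_sin_of_le_of_le_pi_div_two (by linarith) hp b1
      · rw [← Real.sin_pi_sub (j*h)]
        push Not at hp
        exact Real.sin_le_sin_of_le_of_le_pi_div_two (by linarith) (by linarith) (by linarith)
    generalize ∑ l ∈ Finset.Icc 1 m, cos (2*l*(j*h)) = A at *
    generalize ∑ l ∈ Finset.Icc 1 m, cos (2*l*h) = B at *
    have u := Real.sin_le_one ((2*(m:ℝ)+1)*(j*h))
    have v : 1 < sin (2*h) * (2*B+1) := by
      rw [sin_two_mul]
      calc 1 < _ := key
        _ = _ := by rw [← d1]; ring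
    by_contra hc
    push Not at hc
    have w : 0 < 2*B+1 := by
      by_contra hc2
      push Not at hc2
      nlinarith
    nlinarith [mul_le_mul hsj (by linarith : 2*B+1 ≤ 2*A+1) w.le (by linarith)]
  obtain ⟨j, rfl⟩ : ∃ j, k = j + 1 := ⟨k-1, by omega⟩
  have m1 : ∑ l ∈ Finset.Icc 1 m, cos (2*l*((j:ℕ)*h)) ≤ ∑ l ∈ Finset.Icc 1 m, cos (2*l*h) := by
    rcases Nat.lt_or_ge j 2 with hj | hj
    · obtain rfl : j = 1 := by omega
      simp
    · exact (main j hj (by omega)).le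
  have m2 := main (j+2) (by omega) (by omega)
  have e : ∑ l ∈ Finset.Icc 1 m, cos (2*l*h) * (-1 + cos (2*((j+1:ℕ):ℝ)*l*h)) =
      (1/2) * ∑ l ∈ Finset.Icc 1 m, cos (2*l*((j:ℕ)*h))
      + (1/2) * ∑ l ∈ Finset.Icc 1 m, cos (2*l*((j+2:ℕ)*h))
      - ∑ l ∈ Finset.Icc 1 m, cos (2*l*h) := by
    rw [Finset.mul_sum, Finset.mul_sum, ← Finset.sum_add_distrib, ← Finset.sum_sub_distrib]
    apply Finset.sum_congr rfl
    intro l _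
    have e1 : 2*(l:ℝ)*((j:ℕ)*h) = 2*((j+1:ℕ):ℝ)*l*h - 2*l*h := by push_cast; ring
    have e2 : 2*(l:ℝ)*((j+2:ℕ)*h) = 2*((j+1:ℕ):ℝ)*l*h + 2*l*h := by push_cast; ring
    rw [e1, e2, cos_add, cos_sub]
    ring
  rw [e]
  linarith

lemma core (N m k : ℕ) (h : ℝ) (hN : 5 ≤ N) (hh : (N:ℝ) * h = π) (hl : N ≤ 4*(m+1))
    (hu : 2*(m+1)+1 ≤ N)
    (hs : ∑ l ∈ Finset.Icc 1 m, cos (2*l*h) * (-1 + cos (2*l*h)) < 0)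
    (hk1 : 1 ≤ k) (hk2 : k ≤ N-1) :
    ∑ l ∈ Finset.Icc 1 m, cos (2*l*h) * (-1 + cos (2*k*l*h)) < 0 := by
  by_cases hk : 2*k ≤ N
  · exact core_half N m k h hN hh hl hu hs hk1 hk
  · have := core_half N m (N-k) h hN hh hl hu hs (by omega) (by omega)
    convert this using 4 with l _
    rw [Nat.cast_sub (by omega)]
    have e : 2*((N:ℝ)-k)*l*h = l*(2*π) - 2*k*l*h := by rw [← hh]; ring
    rw [e, Real.cos_nat_mul_two_pi_sub]

lemma a_neg (h : ℝ) (l N : ℕ) (h0 : 0 < h) (hh : (N:ℝ) * h = π) (hl : 1 ≤ l) (hl4 : 4*l < N) :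
    cos (2*l*h) * (-1 + cos (2*l*h)) < 0 := by
  have hlr : (1:ℝ) ≤ l := by exact_mod_cast hl
  have hl4r : 4*(l:ℝ) < N := by exact_mod_cast hl4
  have h1 : 0 < cos (2*l*h) := Real.cos_pos_of_mem_Ioo ⟨by nlinarith [Real.pi_pos], by nlinarith⟩
  have h2 : cos (2*l*h) < cos 0 :=
    Real.cos_lt_cos_of_nonneg_of_le_pi le_rfl (by nlinarith) (by positivity)
  rw [cos_zero] at h2
  nlinarith

/-- the half sum is nonnegative -/
lemma half_nonneg (N M : ℕ) (h : ℝ) (hN : 5 ≤ N) (hh : (N:ℝ) * h = π)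
    (hM : N = 2*M+1 ∨ N = 2*M+2) :
    0 ≤ ∑ l ∈ Finset.Icc 1 M, cos (2*l*h) * (-1 + cos (2*l*h)) := by
  have hpi := Real.pi_pos
  have hNr : (5:ℝ) ≤ N := by exact_mod_cast hN
  have h0 : 0 < h := by
    by_contra hc
    push Not at hc
    nlinarith
  have h1 : h ≤ π/5 := by nlinarith
  have hsp : 0 < sin h := Real.sin_pos_of_pos_of_lt_pi h0 (by linarith)
  have hcp : 0 < cos h := Real.cos_pos_of_mem_Ioo ⟨by linarith, by linarith⟩
  rw [closed M h hsp.ne' hcp.ne']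
  rcases hM with hM | hM
  · have e : (2*(M:ℝ)+1)*h = π := by rw [← hh, hM]; push_cast; ring
    rw [e, sin_two_pi, sin_pi]
    simp; positivity
  · have e : (2*(M:ℝ)+1)*h = π - h := by rw [← hh, hM]; push_cast; ring
    have e2 : 2*(π - h) = 2*π - 2*h := by ring
    rw [e, sin_pi_sub, e2, Real.sin_two_pi_sub, sin_two_mul]
    have e3 : -(2 * sin h * cos h) / (8 * (sin h * cos h)) = -(1/4) := by field_simp; norm_num
    have e4 : sin h / (2 * sin h) = 1/2 := by field_simp
    rw [e3, e4]
    have : (2:ℝ) ≤ M := by exact_mod_cast (by omega : 2 ≤ M)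
    linarith

/-- exchange inequality -/
lemma exchange (N M K : ℕ) (h : ℝ) (h0 : 0 < h) (hh : (N:ℝ) * h = π)
    (hM : 2*M ≤ N) (hK : K ≤ M) (hK4 : N ≤ 4*K) (x : ℕ → ℝ)
    (hx : ∀ l ∈ Finset.Icc 1 M, x l = 0 ∨ x l = 1) :
    ∑ l ∈ Finset.Icc 1 K, cos (2*l*h) * (-1 + cos (2*l*h))
      + cos (2*K*h) * (-1 + cos (2*K*h)) * (∑ l ∈ Finset.Icc 1 M, x l - K)
    ≤ ∑ l ∈ Finset.Icc 1 M, x l * (cos (2*l*h) * (-1 + cos (2*l*h))) := by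
  have hpi := Real.pi_pos
  set a : ℕ → ℝ := fun l => cos (2*l*h) * (-1 + cos (2*l*h)) with ha
  have hMr : 2*(M:ℝ) ≤ N := by exact_mod_cast hM
  have hKr : (K:ℝ) ≤ M := by exact_mod_cast hK
  have hK4r : (N:ℝ) ≤ 4*K := by exact_mod_cast hK4
  have hmono : ∀ i j : ℕ, i ≤ j → j ≤ M → cos (2*j*h) ≤ cos (2*i*h) := by
    intro i j hij hj
    have hijr : (i:ℝ) ≤ j := by exact_mod_cast hij
    have hjr : (j:ℝ) ≤ M := by exact_mod_cast hj
    exact Real.cos_le_cos_of_nonneg_of_le_pi (by positivity) (by nlinarith) (by nlinarith)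
  have hcK : cos (2*K*h) ≤ 0 :=
    Real.cos_nonpos_of_pi_div_two_le_of_le (by nlinarith) (by nlinarith)
  have lo : ∀ l, l ≤ K → a l ≤ a K := by
    intro l hl
    have := hmono l K hl hK
    have := Real.cos_le_one (2*l*h)
    simp only [ha]
    by_cases hc : 0 ≤ cos (2*l*h)
    · nlinarith
    · push Not at hc
      nlinarith
  have hi : ∀ l, K ≤ l → l ≤ M → a K ≤ a l := by
    intro l hl hl2
    have := hmono K l hl hl2
    simp only [ha]
    nlinarith
  have hsum : ∑ l ∈ Finset.Icc 1 K, (a l - a K) ≤ ∑ l ∈ Finset.Icc 1 M, x l * (a l - a K) := by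
    have hsub : Finset.Icc 1 K ⊆ Finset.Icc 1 M := Finset.Icc_subset_Icc le_rfl hK
    rw [← Finset.sum_sdiff hsub]
    have p1 : 0 ≤ ∑ l ∈ Finset.Icc 1 M \ Finset.Icc 1 K, x l * (a l - a K) := by
      apply Finset.sum_nonneg
      intro l hl
      simp only [Finset.mem_sdiff, Finset.mem_Icc] at hl
      have := hi l (by omega) (by omega)
      rcases hx l (by simp only [Finset.mem_Icc]; omega) with h | h <;> rw [h] <;> linarith
    have p2 : ∑ l ∈ Finset.Icc 1 K, (a l - a K) ≤ ∑ l ∈ Finset.Icc 1 K, x l * (a l - a K) := by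
      apply Finset.sum_le_sum
      intro l hl
      have hl' := hsub hl
      simp only [Finset.mem_Icc] at hl
      have := lo l (by omega)
      rcases hx l hl' with h | h <;> rw [h] <;> linarith
    linarith
  have e1 : ∑ l ∈ Finset.Icc 1 K, (a l - a K) = ∑ l ∈ Finset.Icc 1 K, a l - K * a K := by
    rw [Finset.sum_sub_distrib]; simp
  have e2 : ∑ l ∈ Finset.Icc 1 M, x l * (a l - a K) =
      ∑ l ∈ Finset.Icc 1 M, x l * a l - (∑ l ∈ Finset.Icc 1 M, x l) * a K := by
    rw [Finset.sum_mul, ← Finset.sum_sub_distrib]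
    apply Finset.sum_congr rfl; intros; ring
  rw [e1, e2] at hsum
  change ∑ l ∈ Finset.Icc 1 K, a l + a K * (∑ l ∈ Finset.Icc 1 M, x l - K) ≤
    ∑ l ∈ Finset.Icc 1 M, x l * a l
  linarith

lemma sum_nat (M : ℕ) (x : ℕ → ℝ) (hx : ∀ l ∈ Finset.Icc 1 M, x l = 0 ∨ x l = 1) :
    ∃ n : ℕ, ∑ l ∈ Finset.Icc 1 M, x l = n := by
  induction M with
  | zero => exact ⟨0, by simp⟩
  | succ M ih =>
    obtain ⟨n, hn⟩ := ih (fun l hl => hx l (Finset.Icc_subset_Icc le_rfl (by omega) hl))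
    rw [Finset.sum_Icc_succ_top (by omega), hn]
    rcases hx (M+1) (by simp) with h | h
    · exact ⟨n, by rw [h]; simp⟩
    · exact ⟨n+1, by rw [h]; push_cast; rfl⟩

/-- with `a K ≤ 1` or by the estimate, `s (K-1) ≥ -1`. -/
lemma mid_case (N m : ℕ) (h : ℝ) (hN : 6 ≤ N) (hh : (N:ℝ) * h = π) (hu : 2*(m+1) ≤ N)
    (hs : 0 ≤ ∑ l ∈ Finset.Icc 1 (m+1), cos (2*l*h) * (-1 + cos (2*l*h))) :
    -1 ≤ ∑ l ∈ Finset.Icc 1 m, cos (2*l*h) * (-1 + cos (2*l*h)) := by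
  have hpi := Real.pi_pos
  have hNr : (6:ℝ) ≤ N := by exact_mod_cast hN
  have hur : 2*((m:ℝ)+1) ≤ N := by exact_mod_cast hu
  have h0 : 0 < h := by
    by_contra hc
    push Not at hc
    nlinarith
  have h1 : h ≤ π/6 := by nlinarith
  by_cases hc : 7*π/10 ≤ (2*m+2)*h
  · exact mid_est m h h0 h1 hc (by nlinarith)
  · push Not at hc
    rw [Finset.sum_Icc_succ_top (by omega)] at hs
    have e : 2*((m+1:ℕ):ℝ)*h = (2*m+2)*h := by push_cast; ring
    rw [e] at hs
    have c1 : cos (7*π/10) ≤ cos ((2*m+2)*h) :=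
      Real.cos_le_cos_of_nonneg_of_le_pi (by positivity) (by linarith) hc.le
    have c2 : -0.6 ≤ cos (7*π/10) := by
      have : 7*π/10 = π/5 + π/2 := by ring
      rw [this, Real.cos_add_pi_div_two]
      have s5 : (2.236:ℝ) < √5 := by
        rw [Real.lt_sqrt (by norm_num)]; norm_num
      have hc5 := Real.cos_pi_div_five
      have := Real.sin_sq_add_cos_sq (π/5)
      nlinarith
    have c3 := Real.cos_le_one ((2*m+2)*h)
    nlinarith

lemma fold_sum (N M : ℕ) (hM : N = 2*M+1 ∨ N = 2*M+2) (g : ℕ → ℝ)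
    (hg : ∀ l ∈ Finset.Icc 1 (N-1), g l = g (N-l)) :
    ∑ l ∈ Finset.Icc 1 (N-1), g l =
      2 * ∑ l ∈ Finset.Icc 1 M, g l + (if N = 2*M+2 then g (M+1) else 0) := by
  rcases hM with rfl | rfl
  · rw [if_neg (by omega), add_zero]
    exact fold_odd M g hg
  · rw [if_pos rfl]
    exact fold_even M g hg

lemma sym_term (N k l : ℕ) (h : ℝ) (hh : (N:ℝ) * h = π) (hl : l ≤ N) :
    cos (2*k*((N-l:ℕ):ℝ)*h) = cos (2*k*l*h) := by
  rw [Nat.cast_sub hl]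
  have e : 2*(k:ℝ)*((N:ℝ)-l)*h = k*(2*π) - 2*k*l*h := by rw [← hh]; ring
  rw [e, Real.cos_nat_mul_two_pi_sub]

/-- For `N ≥ 5`, the maximum connectivity over feasible vectors for `(N, 1)` is
`2(k_c - 1)/(N - 1)`, where `k_c` is the least `k ∈ {1,…,N-1}` with `s_k ≥ 0`. -/
theorem max_connectivity_p_one (N : ℕ) (hN : 5 ≤ N)
    (s : ℕ → ℝ)
    (hs : ∀ k, s k = ∑ l ∈ Finset.Icc 1 k,
      Real.cos (2 * π * l / N) * (-1 + Real.cos (2 * π * l / N)))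
    (kc : ℕ) (hkc : IsLeast {k | k ∈ Finset.Icc 1 (N - 1) ∧ 0 ≤ s k} kc) :
    IsGreatest
      {μ : ℝ | ∃ x : ℕ → ℝ, feasible N 1 x ∧
        μ = (∑ l ∈ Finset.Icc 1 (N - 1), x l) / ((N : ℝ) - 1)}
      (2 * ((kc : ℝ) - 1) / ((N : ℝ) - 1)) := by
  obtain ⟨h, hhd⟩ : ∃ h : ℝ, h = π / N := ⟨_, rfl⟩
  have hpi := Real.pi_pos
  have hNr : (5:ℝ) ≤ N := by exact_mod_cast hN
  have hN0 : (N:ℝ) ≠ 0 := by linarith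
  have hh : (N:ℝ) * h = π := by rw [hhd]; field_simp
  have h0 : 0 < h := by rw [hhd]; positivity
  obtain ⟨M, hM⟩ : ∃ M, N = 2*M+1 ∨ N = 2*M+2 := ⟨(N-1)/2, by omega⟩
  have hs' : ∀ k, s k = ∑ l ∈ Finset.Icc 1 k, cos (2*l*h) * (-1 + cos (2*l*h)) := by
    intro k
    rw [hs]
    apply Finset.sum_congr rfl
    intro l _
    have : 2 * π * l / N = 2*l*h := by rw [hhd]; ring
    rw [this]
  have hfeas : ∀ x : ℕ → ℝ, ∀ k : ℕ,
      ∑ l ∈ Finset.Icc 1 (N - 1),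
        x l * Real.cos (2 * π * (1:ℕ) * l / N) * (-1 + Real.cos (2 * π * k * l / N)) =
      ∑ l ∈ Finset.Icc 1 (N - 1), x l * (cos (2*l*h) * (-1 + cos (2*k*l*h))) := by
    intro x k
    apply Finset.sum_congr rfl
    intro l _
    have e1 : 2 * π * (1:ℕ) * l / N = 2*l*h := by rw [hhd]; push_cast; ring
    have e2 : 2 * π * k * l / N = 2*k*l*h := by rw [hhd]; ring
    rw [e1, e2]; ring
  obtain ⟨⟨hkI, hk0⟩, hmin⟩ := hkc
  rw [Finset.mem_Icc] at hkI
  have hlt : ∀ k, 1 ≤ k → k < kc → s k < 0 := by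
    intro k h1 h2
    by_contra hc
    push Not at hc
    have := hmin (a := k) ⟨by rw [Finset.mem_Icc]; omega, hc⟩
    omega
  have hkM : kc ≤ M := by
    apply hmin
    refine ⟨by rw [Finset.mem_Icc]; omega, ?_⟩
    rw [hs']
    exact half_nonneg N M h hN hh hM
  have hk4 : N ≤ 4*kc := by
    by_contra hc
    push Not at hc
    have : s kc < 0 := by
      rw [hs']
      apply Finset.sum_neg'
      · intro l hl
        rw [Finset.mem_Icc] at hl
        exact (a_neg h l N h0 hh hl.1 (by omega)).le
      · exact ⟨1, by rw [Finset.mem_Icc]; omega, a_neg h 1 N h0 hh le_rfl (by omega)⟩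
    linarith
  obtain ⟨m, rfl⟩ : ∃ m, kc = m + 1 := ⟨kc-1, by omega⟩
  have hm1 : 1 ≤ m := by omega
  have hsm : s m < 0 := hlt m hm1 (by omega)
  rw [hs'] at hsm hk0
  have hden : (0:ℝ) < (N:ℝ) - 1 := by linarith
  have hcast : ((m+1:ℕ):ℝ) - 1 = m := by push_cast; ring
  rw [hcast]
  constructor
  · -- attained
    set x : ℕ → ℝ := fun l => if l ≤ m ∨ N - l ≤ m then 1 else 0 with hxd
    have hxs : ∀ l ∈ Finset.Icc 1 (N - 1), x l = x (N - l) := by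
      intro l hl
      rw [Finset.mem_Icc] at hl
      have : (l ≤ m ∨ N - l ≤ m) ↔ (N - l ≤ m ∨ N - (N - l) ≤ m) := by omega
      simp only [hxd]
      by_cases hc : l ≤ m ∨ N - l ≤ m
      · rw [if_pos hc, if_pos (this.1 hc)]
      · rw [if_neg hc, if_neg (fun h => hc (this.2 h))]
    have hmid : N = 2*M+2 → x (M+1) = 0 := by
      intro hE
      simp only [hxd]
      rw [if_neg (by omega)]
    have hsumx : ∀ g : ℕ → ℝ, (∀ l ∈ Finset.Icc 1 (N-1), g l = g (N-l)) →
        ∑ l ∈ Finset.Icc 1 (N-1), x l * g l = 2 * ∑ l ∈ Finset.Icc 1 m, g l := by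
      intro g hg
      rw [fold_sum N M hM (fun l => x l * g l) (fun l hl => by
        rw [← hxs l hl, ← hg l hl])]
      have z : (if N = 2*M+2 then x (M+1) * g (M+1) else 0) = 0 := by
        split_ifs with hE
        · rw [hmid hE, zero_mul]
        · rfl
      rw [z, add_zero]
      congr 1
      symm
      have hsub : Finset.Icc 1 m ⊆ Finset.Icc 1 M := Finset.Icc_subset_Icc le_rfl (by omega)
      rw [← Finset.sum_subset hsub (f := fun l => x l * g l)]
      · apply Finset.sum_congr rfl
        intro l hl
        rw [Finset.mem_Icc] at hl
        simp only [hxd]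
        rw [if_pos (by omega), one_mul]
      · intro l hl hl2
        rw [Finset.mem_Icc] at hl hl2
        simp only [hxd]
        rw [if_neg (by omega), zero_mul]
    refine ⟨x, ⟨?_, hxs, ?_⟩, ?_⟩
    · intro l _
      simp only [hxd]
      split_ifs <;> simp
    · intro k hk
      rw [Finset.mem_Icc] at hk
      rw [hfeas, hsumx (fun l => cos (2*l*h) * (-1 + cos (2*k*l*h)))]
      · have := core N m k h hN hh (by omega) (by omega) hsm hk.1 hk.2
        linarith
      · intro l hl
        rw [Finset.mem_Icc] at hl
        have e1 := sym_term N 1 l h hh (by omega)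
        have e2 := sym_term N k l h hh (by omega)
        simp only [Nat.cast_one, mul_one] at e1
        simp only [e1, e2]
    · have := hsumx (fun _ => 1) (fun _ _ => rfl)
      simp only [mul_one] at this
      rw [this]
      simp
  · rintro μ ⟨x, ⟨hx01, hxs, hxf⟩, rfl⟩
    apply div_le_div_of_nonneg_right _ hden.le
    have hf := hxf 1 (by rw [Finset.mem_Icc]; omega)
    rw [hfeas] at hf
    simp only [Nat.cast_one, mul_one] at hf
    rw [fold_sum N M hM _ (by
      intro l hl
      rw [← hxs l hl]
      rw [Finset.mem_Icc] at hl
      have e1 := sym_term N 1 l h hh (by omega)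
      simp only [Nat.cast_one, mul_one] at e1
      rw [e1])] at hf
    rw [fold_sum N M hM x hxs]
    have hx01' : ∀ l ∈ Finset.Icc 1 M, x l = 0 ∨ x l = 1 := fun l hl =>
      hx01 l (Finset.Icc_subset_Icc le_rfl (by omega) hl)
    have ex := exchange N M (m+1) h h0 hh (by omega) hkM hk4 x hx01'
    obtain ⟨n, hn⟩ := sum_nat M x hx01'
    rw [hn] at ex ⊢
    have hKpos : 0 ≤ cos (2*((m+1:ℕ):ℝ)*h) * (-1 + cos (2*((m+1:ℕ):ℝ)*h)) := by
      rw [Finset.sum_Icc_succ_top (by omega)] at hk0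
      linarith
    have hn1 : 0 ≤ (if N = 2*M+2 then
        x (M+1) * (cos (2*((M+1:ℕ):ℝ)*h) * (-1 + cos (2*((M+1:ℕ):ℝ)*h))) else 0) → n ≤ m := by
      intro hpos
      by_contra hc
      push Not at hc
      have : ((m+1:ℕ):ℝ) ≤ n := by exact_mod_cast hc
      have := mul_nonneg hKpos (sub_nonneg.2 this)
      linarith
    by_cases hE : N = 2*M+2
    · rw [if_pos hE] at hf hn1 ⊢
      have hcm : cos (2*((M+1:ℕ):ℝ)*h) = -1 := by
        have : 2*((M+1:ℕ):ℝ)*h = π := by rw [← hh, hE]; push_cast; ring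
        rw [this, cos_pi]
      rw [hcm] at hf hn1
      rcases hx01 (M+1) (by rw [Finset.mem_Icc]; omega) with hx | hx
      · rw [hx] at hn1 ⊢
        have : (n:ℝ) ≤ m := by exact_mod_cast hn1 (by simp)
        linarith
      · rw [hx] at hf ⊢
        have hmc := mid_case N m h (by omega) hh (by omega) hk0
        have : n + 1 ≤ m := by
          by_contra hc
          push Not at hc
          have h1 : (m:ℝ) ≤ n := by exact_mod_cast (by omega : m ≤ n)
          have h2 := mul_nonneg hKpos (sub_nonneg.2 h1)
          rw [Finset.sum_Icc_succ_top (by omega)] at ex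
          have h3 : (n:ℝ) - ((m+1:ℕ):ℝ) = (n - m) - 1 := by push_cast; ring
          rw [h3] at ex
          linarith
        have : (n:ℝ) + 1 ≤ m := by exact_mod_cast this
        linarith
    · rw [if_neg hE] at hn1 ⊢
      have : (n:ℝ) ≤ m := by exact_mod_cast hn1 le_rfl
      linarith
end

section
/- Let Ñ ≥ 5 be an integer and for k ∈ {1,…,Ñ−1} set s_k = ∑_{l=1}^{k} cos(2πl/Ñ)·(−1 + cos(2πl/Ñ)). Then the set {k ∈ {1,…,Ñ−1} : s_k ≥ 0} is nonempty, and its least element k_c satisfies Ñ/4 < k_c ≤ Ñ−1; moreover s_k < 0 for every k with 1 ≤ k < Ñ/4. -/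
open Real Finset

lemma aux_tel (x : ℝ) (n : ℕ) :
    2 * Real.sin x * ∑ l ∈ Finset.Icc 1 n, Real.cos (2 * x * l)
      = Real.sin ((2 * n + 1) * x) - Real.sin x := by
  induction n with
  | zero => simp
  | succ n ih =>
    rw [Finset.sum_Icc_succ_top (by omega), mul_add, ih]
    push_cast
    have e1 : (2 * ((n : ℝ) + 1) + 1) * x = 2 * x * (n + 1) + x := by ring
    have e2 : (2 * (n : ℝ) + 1) * x = 2 * x * (n + 1) - x := by ring
    rw [e1, e2, Real.sin_add, Real.sin_sub]
    ring

lemma aux_neg (N k : ℕ) (hN : 5 ≤ N) (hk : 1 ≤ k) (h4 : 4 * k ≤ N) :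
    ∑ l ∈ Finset.Icc 1 k,
      Real.cos (2 * π * l / N) * (-1 + Real.cos (2 * π * l / N)) < 0 := by
  have hN0 : (0 : ℝ) < N := by exact_mod_cast (by omega : 0 < N)
  have hN5 : (5 : ℝ) ≤ N := by exact_mod_cast hN
  have hpi := Real.pi_pos
  have key : ∀ l ∈ Finset.Icc 1 k,
      Real.cos (2 * π * l / N) * (-1 + Real.cos (2 * π * l / N)) ≤ 0 := by
    intro l hl
    rw [Finset.mem_Icc] at hl
    have hl4 : (4 : ℝ) * l ≤ N := by exact_mod_cast (by omega : 4 * l ≤ N)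
    have h0 : 0 ≤ 2 * π * l / N := by positivity
    have h1 : 2 * π * l / N ≤ π / 2 := by
      rw [div_le_iff₀ hN0]; nlinarith
    have := Real.cos_nonneg_of_neg_pi_div_two_le_of_le (by linarith) h1
    have := Real.cos_le_one (2 * π * l / N)
    nlinarith
  have hlt := Finset.sum_lt_sum (g := fun _ => (0 : ℝ)) key
    ⟨1, by simp [hk], by
      have h0 : 0 < 2 * π * (1 : ℕ) / N := by positivity
      have h1 : 2 * π * (1 : ℕ) / N < π / 2 := by
        rw [div_lt_iff₀ hN0]; push_cast; nlinarith
      have hc := Real.cos_pos_of_mem_Ioo ⟨by linarith, h1⟩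
      have hc1 : Real.cos (2 * π * (1 : ℕ) / N) < 1 := by
        rw [← Real.cos_zero]
        exact Real.cos_lt_cos_of_nonneg_of_le_pi le_rfl (by linarith) h0
      nlinarith⟩
  simpa using hlt

lemma aux_nonneg (N : ℕ) (hN : 5 ≤ N) :
    0 ≤ ∑ l ∈ Finset.Icc 1 (N - 1),
      Real.cos (2 * π * l / N) * (-1 + Real.cos (2 * π * l / N)) := by
  obtain ⟨m, rfl⟩ : ∃ m, N = m + 1 := ⟨N - 1, by omega⟩
  have hN0 : (0 : ℝ) < (m + 1 : ℕ) := by positivity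
  have hN5 : (5 : ℝ) ≤ (m + 1 : ℕ) := by exact_mod_cast hN
  have hpi := Real.pi_pos
  have hsin : 0 < Real.sin (π / (m + 1 : ℕ)) := by
    apply Real.sin_pos_of_pos_of_lt_pi (by positivity)
    rw [div_lt_iff₀ hN0]; nlinarith
  have h := aux_tel (π / (m + 1 : ℕ)) (m + 1)
  have e : (2 * ((m + 1 : ℕ) : ℝ) + 1) * (π / (m + 1 : ℕ)) = π / (m + 1 : ℕ) + 2 * π := by
    field_simp
    ring
  rw [e, Real.sin_add_two_pi, sub_self] at h
  have hsum := (mul_eq_zero.mp h).resolve_left (by positivity)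
  have hfull : 0 ≤ ∑ l ∈ Finset.Icc 1 (m + 1),
      Real.cos (2 * π * l / (m + 1 : ℕ)) * (-1 + Real.cos (2 * π * l / (m + 1 : ℕ))) := by
    have : ∀ l ∈ Finset.Icc 1 (m + 1),
      Real.cos (2 * π * l / (m + 1 : ℕ)) * (-1 + Real.cos (2 * π * l / (m + 1 : ℕ)))
        = Real.cos (2 * π * l / (m + 1 : ℕ)) ^ 2
          - Real.cos (2 * (π / (m + 1 : ℕ)) * l) := by
      intro l _
      rw [show 2 * (π / (m + 1 : ℕ)) * (l : ℝ) = 2 * π * l / (m + 1 : ℕ) by ring]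
      ring
    rw [Finset.sum_congr rfl this, Finset.sum_sub_distrib, hsum, sub_zero]
    positivity
  rw [Finset.sum_Icc_succ_top (by omega), mul_div_assoc, div_self hN0.ne', mul_one,
    Real.cos_two_pi] at hfull
  simpa using hfull

/-- For `Ñ ≥ 5` and `s_k = ∑_{l=1}^k cos(2πl/Ñ)(-1 + cos(2πl/Ñ))`, the set
`{k ∈ {1,…,Ñ-1} : s_k ≥ 0}` is nonempty, its least element `k_c` satisfies
`Ñ/4 < k_c ≤ Ñ-1`, and `s_k < 0` for all `k` with `1 ≤ k < Ñ/4`. -/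
theorem kc_exists_and_location (Nt : ℕ) (hNt : 5 ≤ Nt) (s : ℕ → ℝ)
    (hs : ∀ k, s k = ∑ l ∈ Finset.Icc 1 k,
      Real.cos (2 * π * l / Nt) * (-1 + Real.cos (2 * π * l / Nt))) :
    (∃ kc : ℕ, IsLeast {k | k ∈ Finset.Icc 1 (Nt - 1) ∧ 0 ≤ s k} kc ∧
      (Nt : ℝ) / 4 < (kc : ℝ) ∧ kc ≤ Nt - 1) ∧
    (∀ k : ℕ, 1 ≤ k → (k : ℝ) < (Nt : ℝ) / 4 → s k < 0) := by
  have hneg : ∀ k : ℕ, 1 ≤ k → (k : ℝ) ≤ (Nt : ℝ) / 4 → s k < 0 := by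
    intro k hk h
    rw [hs]
    refine aux_neg Nt k hNt hk ?_
    have : (4 : ℝ) * k ≤ Nt := by linarith
    exact_mod_cast this
  refine ⟨?_, fun k hk h => hneg k hk h.le⟩
  have hne : {k | k ∈ Finset.Icc 1 (Nt - 1) ∧ 0 ≤ s k}.Nonempty :=
    ⟨Nt - 1, Finset.mem_Icc.mpr ⟨by omega, le_rfl⟩, by rw [hs]; exact aux_nonneg Nt hNt⟩
  have hmem := Nat.sInf_mem hne
  refine ⟨_, ⟨hmem, fun k hk => Nat.sInf_le hk⟩, ?_, (Finset.mem_Icc.mp hmem.1).2⟩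
  by_contra hcon
  exact absurd (hneg _ (Finset.mem_Icc.mp hmem.1).1 (not_lt.mp hcon)) (not_lt.mpr hmem.2)
end

section
/- Let Ñ ≥ 5 be an integer, let k_c = k_c(Ñ) be the least k ∈ {1,…,Ñ−1} with s_k ≥ 0, and let K_c ∈ (1/4, 1/2) be the unique root of 4πK + sin(4πK) − 4 sin(2πK) = 0 in that interval. Then k_c ≤ Ñ·K_c + 1/2 + 2π/(3Ñ). -/
open Real Finset

lemma aux_closed (t : ℝ) (k : ℕ) :
    4 * sin (2 * t) * ∑ l ∈ Finset.Icc 1 k, cos (2 * t * l) * (-1 + cos (2 * t * l))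
      = (2 * k + 1) * sin (2 * t) + sin (2 * ((2 * k + 1) * t)) - 4 * cos t * sin ((2 * k + 1) * t) := by
  induction k with
  | zero => simp [sin_two_mul]; ring
  | succ k ih =>
    rw [Finset.sum_Icc_succ_top (by omega), mul_add, ih]
    push_cast
    have e1 : (2 * (k:ℝ) + 1) * t = 2 * t * (k + 1) - t := by ring
    have e2 : (2 * ((k:ℝ) + 1) + 1) * t = 2 * t * (k + 1) + t := by ring
    rw [e1, e2]
    generalize 2 * t * ((k:ℝ) + 1) = y
    simp only [sin_two_mul, sin_add, sin_sub, cos_add, cos_sub]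
    have h1 := sin_sq_add_cos_sq y
    have h2 := sin_sq_add_cos_sq t
    have h3 : sin y ^ 2 = 1 - cos y ^ 2 := by linarith
    ring_nf
    rw [h3]
    ring

lemma aux_deriv (c x : ℝ) : HasDerivAt (fun x : ℝ => 2 * x + sin (2 * x) - 4 * sin x - c * x)
    (4 * cos x ^ 2 - 4 * cos x - c) x := by
  have h1 : HasDerivAt (fun x : ℝ => 2 * x) 2 x := by simpa using (hasDerivAt_id x).const_mul 2
  have h2 : HasDerivAt (fun x : ℝ => c * x) c x := by simpa using (hasDerivAt_id x).const_mul c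
  have h := ((h1.add h1.sin).sub ((hasDerivAt_sin x).const_mul 4)).sub h2
  have e : 4 * cos x ^ 2 - 4 * cos x - c = 2 + cos (2 * x) * 2 - 4 * cos x - c := by
    rw [cos_two_mul]; ring
  rw [e]
  exact h

lemma aux_mono (c a : ℝ) (ha : ∀ x, a ≤ x → x ≤ π → 0 ≤ 4 * cos x ^ 2 - 4 * cos x - c) :
    MonotoneOn (fun x : ℝ => 2 * x + sin (2 * x) - 4 * sin x - c * x) (Set.Icc a π) := by
  apply monotoneOn_of_deriv_nonneg (convex_Icc _ _)
  · exact fun x _ => (aux_deriv c x).continuousAt.continuousWithinAt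
  · exact fun x _ => (aux_deriv c x).differentiableAt.differentiableWithinAt
  · intro x hx
    rw [interior_Icc] at hx
    rw [(aux_deriv c x).deriv]
    exact ha x hx.1.le hx.2.le

lemma aux_cos_s17 : cos (2 * π / 3) = -1 / 2 := by
  rw [show 2 * π / 3 = π - π / 3 by ring, cos_pi_sub, cos_pi_div_three]; ring

lemma aux_sin : sin (2 * π / 3) = √3 / 2 := by
  rw [show 2 * π / 3 = π - π / 3 by ring, sin_pi_sub, sin_pi_div_three]

lemma aux_X (X : ℝ) (h1 : π / 2 ≤ X) (h0 : 2 * X + sin (2 * X) - 4 * sin X = 0) :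
    2 * π / 3 ≤ X := by
  by_contra hlt
  push Not at hlt
  have hm := aux_mono 0 (π / 2) (fun x hx hx' => by
    have := cos_nonpos_of_pi_div_two_le_of_le hx (by linarith [pi_pos])
    nlinarith)
  have := hm ⟨h1, by linarith [pi_pos]⟩ ⟨by linarith [pi_pos], by linarith [pi_pos]⟩ hlt.le
  simp only [zero_mul, sub_zero] at this
  rw [h0, sin_two_mul, aux_cos_s17, aux_sin] at this
  have h3 : (1.7 : ℝ) ≤ √3 := Real.le_sqrt_of_sq_le (by norm_num)
  have := pi_lt_d2
  linarith

lemma aux_main (X x t : ℝ) (hX : π / 2 ≤ X) (h0 : 2 * X + sin (2 * X) - 4 * sin X = 0)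
    (ht : 0 < t) (ht' : t ≤ 0.63) (hx : X + 4 * t ^ 2 / 3 ≤ x) (hx2 : x ≤ 2 * π) :
    0 ≤ x / t * sin (2 * t) + sin (2 * x) - 4 * cos t * sin x := by
  have hS : t - t ^ 3 / 4 < sin t := by
    have := sin_gt_sub_cube ht
    have : 0 < t ^ 3 := by positivity
    linarith
  have hC : 1 - t ^ 2 / 2 ≤ cos t := one_sub_sq_div_two_le_cos
  have ht2 : t ^ 2 ≤ 0.4 := by nlinarith
  have hCp : 0.8 ≤ cos t := by linarith
  have hSp : 0 < sin t := sin_pos_of_pos_of_lt_pi ht (by linarith [pi_gt_three])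
  have hxp : 0 < x := by nlinarith [pi_pos]
  have hC1 := cos_le_one t
  rcases le_total π x with h | h
  · have hs : sin x ≤ 0 := by
      have := sin_nonneg_of_nonneg_of_le_pi (x := x - π) (by linarith) (by linarith)
      rw [sin_sub_pi] at this
      linarith
    rw [sin_two_mul x, sin_two_mul t]
    have : 0 < x / t * (2 * sin t * cos t) := by positivity
    nlinarith [cos_le_one x]
  · have hX3 := aux_X X hX h0
    have hm := aux_mono 3 (2 * π / 3) (fun y hy hy' => by
      have := cos_le_cos_of_nonneg_of_le_pi (by positivity) hy' hy
      rw [aux_cos_s17] at this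
      nlinarith)
    have hXx : X ≤ x := by nlinarith
    have hg := hm ⟨hX3, by linarith⟩ ⟨by linarith, h⟩ hXx
    simp only at hg
    have hg' : 4 * t ^ 2 ≤ 2 * x + sin (2 * x) - 4 * sin x := by linarith
    set β := t / sin t with hβ
    set α := t / (sin t * cos t) with hα
    have hβ1 : β ≤ 1 + 0.3 * t ^ 2 := by
      rw [hβ, div_le_iff₀ hSp]
      have : 0 ≤ (1 + 0.3 * t ^ 2) * (sin t - (t - t ^ 3 / 4)) := by
        apply mul_nonneg (by positivity); linarith
      have : 0 ≤ t * t ^ 2 * (0.05 - 0.075 * t ^ 2) := by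
        apply mul_nonneg (by positivity); linarith
      nlinarith
    have hSC : t * (1 - 0.75 * t ^ 2) ≤ sin t * cos t := by
      have h1 : (t - t ^ 3 / 4) * (1 - t ^ 2 / 2) ≤ sin t * cos t :=
        mul_le_mul hS.le hC (by linarith) hSp.le
      have : 0 ≤ t ^ 5 := by positivity
      nlinarith
    have hα1 : α ≤ 1 + 1.1 * t ^ 2 := by
      rw [hα, div_le_iff₀ (by positivity)]
      have : 0 ≤ (1 + 1.1 * t ^ 2) * (sin t * cos t - t * (1 - 0.75 * t ^ 2)) := by
        apply mul_nonneg (by positivity); linarith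
      have : 0 ≤ t * t ^ 2 * (0.35 - 0.825 * t ^ 2) := by
        apply mul_nonneg (by positivity); linarith
      nlinarith
    have hα0 : 1 ≤ α := by
      rw [hα, le_div_iff₀ (by positivity)]
      nlinarith [sin_lt ht]
    have hβ0 : 1 ≤ β := by
      rw [hβ, le_div_iff₀ (by positivity)]
      linarith [sin_lt ht]
    have hG : 0 ≤ 2 * x + α * sin (2 * x) - 4 * β * sin x := by
      have h1 : 0 ≤ (α - 1) * (sin (2 * x) + 1) :=
        mul_nonneg (by linarith) (by linarith [neg_one_le_sin (2 * x)])
      have h2 : 0 ≤ (β - 1) * (1 - sin x) :=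
        mul_nonneg (by linarith) (by linarith [sin_le_one x])
      nlinarith
    have hfin : x / t * sin (2 * t) + sin (2 * x) - 4 * cos t * sin x
        = (2 * x + α * sin (2 * x) - 4 * β * sin x) * (sin t * cos t / t) := by
      have : cos t ≠ 0 := by linarith
      rw [hα, hβ, sin_two_mul t]
      field_simp
    rw [hfin]
    exact mul_nonneg hG (by positivity)

/-- Upper bound of `k_c`: for `Ñ ≥ 5`, with `k_c` the least `k ∈ {1,…,Ñ-1}` such that
`s_k ≥ 0` and `K_c` the unique root of `4πK + sin(4πK) - 4 sin(2πK) = 0` in `(1/4, 1/2)`,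
one has `k_c ≤ Ñ K_c + 1/2 + 2π/(3Ñ)`. -/
theorem kc_upper_bound (Nt : ℕ) (hNt : 5 ≤ Nt) (s : ℕ → ℝ)
    (hs : ∀ k, s k = ∑ l ∈ Finset.Icc 1 k,
      Real.cos (2 * π * l / Nt) * (-1 + Real.cos (2 * π * l / Nt)))
    (kc : ℕ) (hkc : IsLeast {k | k ∈ Finset.Icc 1 (Nt - 1) ∧ 0 ≤ s k} kc)
    (Kc : ℝ) (hKc : Kc ∈ Set.Ioo (1 / 4 : ℝ) (1 / 2))
    (hKc0 : 4 * π * Kc + Real.sin (4 * π * Kc) - 4 * Real.sin (2 * π * Kc) = 0) :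
    (kc : ℝ) ≤ (Nt : ℝ) * Kc + 1 / 2 + 2 * π / (3 * Nt) := by
  by_contra hcon
  push Not at hcon
  obtain ⟨⟨hmem, -⟩, hleast⟩ := hkc
  rw [Finset.mem_Icc] at hmem
  obtain ⟨k, rfl⟩ : ∃ k, kc = k + 1 := ⟨kc - 1, by omega⟩
  have hN : (5:ℝ) ≤ Nt := by exact_mod_cast hNt
  have hNpos : (0:ℝ) < Nt := by linarith
  have hpi := pi_pos
  have hKN : 5 / 4 < (Nt:ℝ) * Kc := by nlinarith [hKc.1]
  have hpos : 0 < 2 * π / (3 * Nt) := by positivity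
  push_cast at hcon
  have hk1 : 1 ≤ k := by
    have : (0:ℝ) < k := by linarith
    exact_mod_cast this
  have hk2 : k + 2 ≤ Nt := by omega
  have hk2' : (k:ℝ) + 2 ≤ Nt := by exact_mod_cast hk2
  have hneg : s k < 0 := by
    by_contra hh
    push Not at hh
    have := hleast (a := k) ⟨Finset.mem_Icc.2 ⟨hk1, by omega⟩, hh⟩
    omega
  obtain ⟨t, htdef⟩ : ∃ t, t = π / Nt := ⟨_, rfl⟩
  have htN : t * Nt = π := by rw [htdef]; field_simp
  have ht : 0 < t := by rw [htdef]; positivity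
  have ht' : t ≤ 0.63 := by nlinarith [pi_lt_d2]
  have hs' : s k = ∑ l ∈ Finset.Icc 1 k, cos (2 * t * l) * (-1 + cos (2 * t * l)) := by
    rw [hs]
    apply Finset.sum_congr rfl
    intro l _
    rw [show 2 * π * (l:ℝ) / Nt = 2 * t * l by rw [htdef]; ring]
  have hcl := aux_closed t k
  rw [← hs'] at hcl
  have hcon2 : 2 * π / (3 * Nt) = 2 * t / 3 := by rw [htdef]; field_simp
  rw [hcon2] at hcon
  have hM := aux_main (2 * π * Kc) ((2 * k + 1) * t) t (by nlinarith [hKc.1])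
    (by rw [← hKc0]; ring_nf) ht ht'
    (by
      have := mul_lt_mul_of_pos_left hcon ht
      have e : 2 * π * Kc = 2 * t * (Nt * Kc) := by rw [← htN]; ring
      rw [e]; nlinarith)
    (by rw [← htN]; nlinarith)
  rw [mul_div_cancel_right₀ _ ht.ne', ← hcl] at hM
  have hsin : 0 < sin (2 * t) := sin_pos_of_pos_of_lt_pi (by linarith) (by linarith [pi_gt_three])
  nlinarith
end
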